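/- arXiv:math/0509351 — 2 statements merged into one kernel-verified Lean document; each statement's English description precedes it below -/
import Mathlib

section
/- There does not exist a non-trivial OC-group; that is, if G is a finite group in which any two elements of the same order lying outside the center Z(G) are conjugate in G, then Z(G) is trivial or Z(G) = G. -/
set_option linter.unusedSectionVars false
set_option linter.unusedVariables false

/-- Working hypotheses: centre `{1, z}` with `z` an involution, and elements of the same order
outside `{1, z}` are conjugate. -/
structure OCZ (G : Type) [Group G] (z : G) : Prop where
  ordz : orderOf z = 2
  comm : ∀ g, Commute z g
  conj : ∀ x y : G, x ≠ 1 → x ≠ z → y ≠ 1 → y ≠ z → orderOf x = orderOf y → ∃ g, g * x * g⁻¹ = y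
  nc : ∀ x : G, (∀ g, Commute x g) → x = 1 ∨ x = z

namespace OCZ

variable {G : Type} [Group G]

lemma exists_max (P : ℕ → Prop) (k B : ℕ) (hk : P k) (hB : ∀ m, P m → m ≤ B) :
    ∃ m, P m ∧ k ≤ m ∧ ∀ m', P m' → m' ≤ m := by
  classical
  refine ⟨Nat.findGreatest P B, Nat.findGreatest_spec (hB k hk) hk, Nat.le_findGreatest (hB k hk) hk,
    fun m' h => Nat.le_findGreatest (hB m' h) h⟩

lemma conj_comm {g x y : G} (h : g * x * g⁻¹ = y) : g * x = y * g := by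
  rw [← h]; group

lemma conj_pow' {g x y : G} (h : g * x * g⁻¹ = y) (k : ℕ) : g * x ^ k * g⁻¹ = y ^ k := by
  rw [← h, conj_pow]

lemma conj_iter {g x : G} {k : ℕ} (h : g * x * g⁻¹ = x ^ k) (j : ℕ) :
    g ^ j * x * (g ^ j)⁻¹ = x ^ (k ^ j) := by
  induction j with
  | zero => simp
  | succ j ih =>
    have : g ^ (j + 1) * x * (g ^ (j + 1))⁻¹ = g * (g ^ j * x * (g ^ j)⁻¹) * g⁻¹ := by
      rw [pow_succ']; group
    rw [this, ih, conj_pow' h, ← pow_mul, pow_succ']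

lemma comm_iff_conj {g x : G} : Commute g x ↔ g * x * g⁻¹ = x := by
  rw [mul_inv_eq_iff_eq_mul]; rfl

lemma comm_iter_iff {g x : G} {k : ℕ} (h : g * x * g⁻¹ = x ^ k) (j : ℕ) :
    Commute (g ^ j) x ↔ k ^ j ≡ 1 [MOD orderOf x] := by
  rw [comm_iff_conj, conj_iter h j]
  conv_lhs => rhs; rw [← pow_one x]
  exact pow_eq_pow_iff_modEq

variable [Finite G]

/-- 2-part / odd part decomposition. -/
lemma two_part (g : G) : ∃ s r, Odd r ∧ orderOf g = 2 ^ s * r ∧ orderOf (g ^ r) = 2 ^ s ∧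
    orderOf (g ^ 2 ^ s) = r := by
  have h0 : orderOf g ≠ 0 := (orderOf_pos g).ne'
  obtain ⟨s, r, hr, h⟩ := Nat.exists_eq_two_pow_mul_odd h0
  refine ⟨s, r, hr, h, ?_, ?_⟩
  · rw [orderOf_pow_of_dvd hr.pos.ne' (h ▸ dvd_mul_left _ _), h, Nat.mul_div_cancel _ hr.pos]
  · rw [orderOf_pow_of_dvd (by positivity) (h ▸ dvd_mul_right _ _), h,
      Nat.mul_div_cancel_left _ (by positivity)]

variable {z : G}

lemma z_ne (H : OCZ G z) : z ≠ 1 := by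
  intro h; have := H.ordz; rw [h, orderOf_one] at this; omega

lemma zz (H : OCZ G z) : z * z = 1 := by
  rw [← sq, ← H.ordz, pow_orderOf_eq_one]

lemma ne_of_ord (H : OCZ G z) {x : G} (h1 : orderOf x ≠ 1) (h2 : orderOf x ≠ 2) : x ≠ 1 ∧ x ≠ z := by
  constructor
  · rintro rfl; simp at h1
  · rintro rfl; exact h2 H.ordz

lemma odd_ne (H : OCZ G z) {x : G} (h1 : x ≠ 1) (h2 : Odd (orderOf x)) : x ≠ z := by
  rintro rfl; rw [H.ordz] at h2; revert h2; decide

lemma odd_ge {x : G} (h1 : x ≠ 1) (h2 : Odd (orderOf x)) : 3 ≤ orderOf x := by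
  have := orderOf_pos x
  have h : orderOf x ≠ 1 := by rwa [Ne, orderOf_eq_one_iff]
  obtain ⟨k, hk⟩ := h2
  omega

lemma conj_central (H : OCZ G z) {g t : G} (h : g * t * g⁻¹ = z) : t = z := by
  have h1 := conj_comm h
  rw [(H.comm g).eq] at h1
  exact mul_left_cancel h1

/-- rationality -/
lemma rational (H : OCZ G z) {x : G} (h1 : x ≠ 1) (h2 : x ≠ z) {k : ℕ}
    (hk : k.Coprime (orderOf x)) : ∃ g, g * x * g⁻¹ = x ^ k := by
  have ho : orderOf (x ^ k) = orderOf x := Nat.Coprime.orderOf_pow hk.symm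
  refine H.conj _ _ h1 h2 ?_ ?_ ho.symm
  · intro h; rw [h, orderOf_one] at ho; exact h1 (orderOf_eq_one_iff.1 ho.symm)
  · intro h
    rw [h, H.ordz] at ho
    rw [← ho] at hk
    have hx : x ^ 2 = 1 := by rw [ho, pow_orderOf_eq_one]
    have hk1 : k % 2 = 1 := by
      rcases Nat.mod_two_eq_zero_or_one k with h | h
      · exact absurd hk (by rw [Nat.coprime_two_right]; simpa [Nat.even_iff] using h)
      · exact h
    rw [← Nat.div_add_mod k 2, hk1, pow_add, pow_mul, hx] at h
    simp at h; exact h2 h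

lemma pow_crt {x y : G} (hxy : Commute x y) (hc : (orderOf x).Coprime (orderOf y)) :
    ∃ a b : ℕ, ∀ x' y' : G, Commute x' y' → orderOf x' = orderOf x → orderOf y' = orderOf y →
      (x' * y') ^ a = x' ∧ (x' * y') ^ b = y' := by
  obtain ⟨a, ha1, ha2⟩ := Nat.chineseRemainder hc 1 0
  obtain ⟨b, hb1, hb2⟩ := Nat.chineseRemainder hc 0 1
  refine ⟨a, b, fun x' y' h hx hy => ?_⟩
  rw [← hx] at ha1 hb1
  rw [← hy] at ha2 hb2
  have e1 := pow_eq_pow_iff_modEq.2 ha1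
  have e2 := pow_eq_pow_iff_modEq.2 ha2
  have e3 := pow_eq_pow_iff_modEq.2 hb1
  have e4 := pow_eq_pow_iff_modEq.2 hb2
  rw [h.mul_pow, h.mul_pow, e1, e2, e3, e4]; simp

/-- commuting pairs of coprime orders -/
lemma pairconj (H : OCZ G z) {x y x' y' : G} (h1 : x ≠ 1) (ho : Odd (orderOf x))
    (hxy : Commute x y) (hxy' : Commute x' y') (hx : orderOf x' = orderOf x)
    (hy : orderOf y' = orderOf y) (hc : (orderOf x).Coprime (orderOf y)) :
    ∃ g, g * x * g⁻¹ = x' ∧ g * y * g⁻¹ = y' := by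
  obtain ⟨a, b, hab⟩ := pow_crt hxy hc
  obtain ⟨e1, e2⟩ := hab x y hxy rfl rfl
  obtain ⟨e3, e4⟩ := hab x' y' hxy' hx hy
  have o1 : orderOf (x * y) = orderOf x * orderOf y := hxy.orderOf_mul_eq_mul_orderOf_of_coprime hc
  have o2 : orderOf (x' * y') = orderOf x * orderOf y := by
    rw [← hx, ← hy]; rw [← hx, ← hy] at hc
    exact hxy'.orderOf_mul_eq_mul_orderOf_of_coprime hc
  have h3 := odd_ge h1 ho
  have h4 := orderOf_pos y
  have h5 : 3 ≤ orderOf x * orderOf y := by nlinarith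
  obtain ⟨n1, n2⟩ := H.ne_of_ord (x := x * y) (by omega) (by omega)
  obtain ⟨n3, n4⟩ := H.ne_of_ord (x := x' * y') (by omega) (by omega)
  obtain ⟨g, hg⟩ := H.conj _ _ n1 n2 n3 n4 (o1.trans o2.symm)
  refine ⟨g, ?_, ?_⟩
  · have := conj_pow' hg a; rwa [e1, e3] at this
  · have := conj_pow' hg b; rwa [e2, e4] at this

/-- an involution commuting with a nontrivial odd element is `z` -/
lemma step2 (H : OCZ G z) {x t : G} (h1 : x ≠ 1) (ho : Odd (orderOf x)) (ht : orderOf t = 2)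
    (hxt : Commute x t) : t = z := by
  obtain ⟨g, -, hg⟩ := H.pairconj (x' := x) (y' := z) h1 ho hxt (H.comm x).symm rfl
    (by rw [ht, H.ordz]) (by rw [ht]; exact ho.coprime_two_right)
  exact H.conj_central hg

lemma step2' (H : OCZ G z) {x t : G} (h1 : x ≠ 1) (ho : Odd (orderOf x)) (ht : t ^ 2 = 1)
    (hxt : Commute x t) : t = 1 ∨ t = z := by
  by_cases h : t = 1
  · exact Or.inl h
  · exact Or.inr (H.step2 h1 ho (orderOf_eq_prime ht h) hxt)

lemma ord_pow_two {u : G} {m j : ℕ} (hu : orderOf u = 2 ^ m) (hj : j ≤ m) :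
    orderOf (u ^ 2 ^ (m - j)) = 2 ^ j := by
  rw [orderOf_pow_of_dvd (by positivity) (by rw [hu]; exact pow_dvd_pow _ (Nat.sub_le _ _)), hu,
    Nat.pow_div (Nat.sub_le _ _) (by norm_num)]
  congr 1; omega

lemma ord_double {b : G} {m : ℕ} (hm : 1 ≤ m) (hb : orderOf (b ^ 2) = 2 ^ m) :
    orderOf b = 2 ^ (m + 1) := by
  have h : 2 ∣ orderOf b := by
    by_contra hc
    have : orderOf (b ^ 2) = orderOf b := by
      apply Nat.Coprime.orderOf_pow
      rwa [Nat.coprime_comm, Nat.Prime.coprime_iff_not_dvd Nat.prime_two]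
    apply hc
    rw [← this, hb]; exact dvd_pow_self _ (by omega)
  rw [orderOf_pow_of_dvd (by norm_num) h] at hb
  rw [pow_succ, ← hb, Nat.div_mul_cancel h]

lemma ord_two_pow_le {u : G} {m : ℕ} (hu : orderOf u = 2 ^ m) : m ≤ Nat.card G := by
  have : 2 ^ m ≤ Nat.card G := hu ▸ Nat.le_of_dvd Nat.card_pos (orderOf_dvd_natCard u)
  exact (Nat.lt_two_pow_self).le.trans this

end OCZ

set_option linter.unusedSectionVars false
set_option linter.unusedVariables false
namespace OCZ
variable {G : Type} [Group G] [Finite G] {z : G}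

lemma comm_of_pow {a u : G} {e : ℕ} (h : Commute a (u ^ e)) (hc : e.Coprime (orderOf u)) :
    Commute a u := by
  obtain ⟨f, hf⟩ := exists_pow_eq_self_of_coprime hc
  rw [← hf]; exact h.pow_right f

lemma z_of_pow (H : OCZ G z) {x u : G} (h1 : x ≠ 1) (ho : Odd (orderOf x)) (hxu : Commute x u)
    {m : ℕ} (hm : 1 ≤ m) (hu : orderOf u = 2 ^ m) : u ^ 2 ^ (m - 1) = z :=
  H.step2 h1 ho (by rw [ord_pow_two hu hm]; norm_num) (hxu.pow_right _)

lemma sub_zp (H : OCZ G z) {x u : G} (h1 : x ≠ 1) (ho : Odd (orderOf x)) (hxu : Commute x u)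
    {m : ℕ} (hm : 1 ≤ m) (hu : orderOf u = 2 ^ m)
    (hmax : ∀ v, Commute x v → orderOf v ≠ 2 ^ (m + 1)) (k : ℕ) :
    ∀ b : G, Commute x b → Commute b u → b ^ 2 ^ k = 1 → b ∈ Subgroup.zpowers u := by
  have hz : z ∈ Subgroup.zpowers u := by
    rw [← H.z_of_pow h1 ho hxu hm hu]; exact Subgroup.npow_mem_zpowers _ _
  induction k with
  | zero => intro b _ _ hb; simp at hb; rw [hb]; exact one_mem _
  | succ k ih =>
    intro b hxb hbu hb
    have h2 := ih (b ^ 2) (hxb.pow_right 2) (hbu.pow_left 2) (by rw [← pow_mul, ← pow_succ', hb])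
    rw [← mem_powers_iff_mem_zpowers] at h2
    obtain ⟨e, he⟩ := h2
    simp only at he
    rcases Nat.even_or_odd e with ⟨f, hf⟩ | hodd
    · have h3 : (b * (u ^ f)⁻¹) ^ 2 = 1 := by
        rw [((hbu.pow_right f).inv_right).mul_pow, ← he, inv_pow, ← pow_mul, hf, mul_two, mul_inv_cancel]
      have h4 := H.step2' h1 ho h3 (hxb.mul_right (hxu.pow_right f).inv_right)
      have h5 : b * (u ^ f)⁻¹ ∈ Subgroup.zpowers u := by
        rcases h4 with h | h <;> rw [h]
        · exact one_mem _
        · exact hz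
      have := mul_mem h5 (Subgroup.npow_mem_zpowers u f)
      simpa using this
    · exfalso
      refine hmax b hxb (ord_double hm ?_)
      rw [← he, Nat.Coprime.orderOf_pow, hu]
      rw [hu]; exact (Nat.coprime_two_left.2 hodd).pow_left m

lemma comm_of_mem {a u b : G} (hb : b ∈ Subgroup.zpowers u) (h : Commute a u) : Commute a b := by
  obtain ⟨k, rfl⟩ := hb; exact h.zpow_right k

lemma no_big (H : OCZ G z) {x u : G} (h1 : x ≠ 1) (ho : Odd (orderOf x)) (hxu : Commute x u)
    {m : ℕ} (hm : 3 ≤ m) (hu : orderOf u = 2 ^ m)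
    (hmax : ∀ v, Commute x v → orderOf v ≠ 2 ^ (m + 1)) : False := by
  have hz := H.z_of_pow h1 ho hxu (by omega) hu
  have hk : (1 + 2 ^ (m - 1)).Coprime (orderOf u) := by
    rw [hu]; apply Nat.Coprime.pow_right
    rw [Nat.coprime_two_right]
    exact (Nat.even_pow.2 ⟨even_two, by omega⟩).one_add
  obtain ⟨a, hax, hau⟩ := H.pairconj (x' := x) (y' := u ^ (1 + 2 ^ (m - 1))) h1 ho hxu
    (hxu.pow_right _) rfl (Nat.Coprime.orderOf_pow hk.symm)
    (by rw [hu]; exact (Nat.coprime_two_right.2 ho).pow_right m)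
  rw [pow_add, pow_one, hz] at hau
  have hau1 := conj_comm hau
  have hz2 := H.zz
  have haa : a ^ 2 * u = u * a ^ 2 := by
    rw [sq, mul_assoc, hau1, ← mul_assoc, ← mul_assoc, hau1]
    rw [mul_assoc u z a, mul_assoc u (z * a) z, mul_assoc z a z, ← (H.comm a).eq, ← mul_assoc z z a,
      hz2, one_mul, mul_assoc]
  obtain ⟨s, r, hr, hs1, hs2, -⟩ := two_part a
  have hxar : Commute x (a ^ r) := (comm_iff_conj.2 hax).symm.pow_right r
  have har : a ^ r * u = u * z * a ^ r := by
    obtain ⟨q, rfl⟩ := hr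
    have : Commute ((a ^ 2) ^ q) u := Commute.pow_left haa q
    rw [pow_succ', pow_mul, mul_assoc, this.eq, ← mul_assoc, hau1]
    simp only [mul_assoc]
  generalize a ^ r = c at *
  have hcu : ¬ Commute c u := by
    intro h
    rw [h.eq, mul_assoc] at har
    have := mul_left_cancel har
    exact H.z_ne (by simpa using this)
  have hcc : Commute (c ^ 2) u := by
    show c ^ 2 * u = u * c ^ 2
    rw [sq, mul_assoc, har, ← mul_assoc, ← mul_assoc, har]
    rw [mul_assoc u z c, mul_assoc u (z * c) z, mul_assoc z c z, ← (H.comm c).eq, ← mul_assoc z z c,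
      hz2, one_mul, mul_assoc]
  have hc1 : c ^ 2 ^ s = 1 := by rw [← hs2, pow_orderOf_eq_one]
  have h2 := H.sub_zp h1 ho hxu (by omega) hu hmax s (c ^ 2) (hxar.pow_right 2) hcc
    (by rw [← pow_mul, mul_comm, pow_mul, hc1, one_pow])
  rw [← mem_powers_iff_mem_zpowers] at h2
  obtain ⟨e, he⟩ := h2
  simp only at he
  rcases Nat.even_or_odd e with ⟨f, hf⟩ | hodd
  · have hpow : ∀ t : ℕ, c * u ^ t = u ^ t * z ^ t * c := by
      intro t
      induction t with
      | zero => simp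
      | succ t ih =>
        rw [pow_succ, ← mul_assoc, ih, mul_assoc _ c u, har, pow_succ]
        have := ((H.comm u).pow_left t).eq
        simp only [mul_assoc]
        rw [← mul_assoc (z ^ t) u, this]
        simp only [mul_assoc]
    obtain ⟨t, ht⟩ : ∃ t, u ^ (2 * t + e) = 1 := by
      refine ⟨f * (2 ^ m - 1), ?_⟩
      have : 2 * (f * (2 ^ m - 1)) + e = 2 ^ m * (2 * f) := by
        have : 2 ^ m = (2 ^ m - 1) + 1 := by have := Nat.one_le_two_pow (n := m); omega
        rw [this, hf]; simp; ring
      rw [this, pow_mul, ← hu, pow_orderOf_eq_one, one_pow]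
    set y := u ^ t * c with hy
    have hy2 : y ^ 2 = z ^ t := by
      have e1 : y ^ 2 = u ^ t * (c * u ^ t) * c := by rw [hy, sq]; simp only [mul_assoc]
      rw [e1, hpow]
      have e2 : u ^ t * (u ^ t * z ^ t * c) * c = (u ^ t * u ^ t) * z ^ t * c ^ 2 := by
        rw [sq]; simp only [mul_assoc]
      rw [e2, ← he, mul_assoc, (((H.comm u).pow_left t).pow_right e).eq, ← mul_assoc, ← pow_add,
        ← pow_add, ← two_mul, ht, one_mul]
    have hxy : Commute x y := (hxu.pow_right t).mul_right hxar
    have hyu : ¬ Commute y u := by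
      intro h
      apply hcu
      have : c = (u ^ t)⁻¹ * y := by rw [hy]; group
      rw [this]
      exact ((Commute.refl u).pow_left t).inv_left.mul_left h
    have key : ∀ v, Commute v u → Commute y v → Commute x v → (y * v) ^ 2 = 1 → False := by
      intro v hv hyv hxv h
      have h3 := H.step2' h1 ho h (hxy.mul_right hxv)
      apply hyu
      have : y = (y * v) * v⁻¹ := by group
      rw [this]
      refine Commute.mul_left ?_ hv.inv_left
      rcases h3 with h | h <;> rw [h]
      · exact Commute.one_left _
      · exact H.comm u
    have hw : (u ^ 2 ^ (m - 2)) ^ 2 = z := by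
      rw [← hz, ← pow_mul, ← pow_succ]; congr 2; omega
    rcases Nat.even_or_odd t with ⟨q, hq⟩ | ⟨q, hq⟩
    · refine key 1 (Commute.one_left _) (Commute.one_right _) (Commute.one_right _) ?_
      rw [mul_one, hy2, hq, ← mul_two, mul_comm, pow_mul, sq, hz2, one_pow]
    · have hyz : y ^ 2 = z := by
        rw [hy2, hq, pow_succ, pow_mul, sq, hz2, one_pow, one_mul]
      have hcw : Commute c (u ^ 2 ^ (m - 2)) := by
        show _ * _ = _ * _
        rw [hpow]
        have : z ^ 2 ^ (m - 2) = 1 := by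
          have : 2 ^ (m - 2) = 2 * 2 ^ (m - 3) := by rw [← pow_succ']; congr 1; omega
          rw [this, pow_mul, sq, hz2, one_pow]
        rw [this, mul_one]
      have hyw : Commute y (u ^ 2 ^ (m - 2)) :=
        (((Commute.refl u).pow_right _).pow_left t).mul_left hcw
      refine key (u ^ 2 ^ (m - 2)) ((Commute.refl u).pow_left _) hyw (hxu.pow_right _) ?_
      rw [hyw.mul_pow, hyz, hw, hz2]
  · apply hcu
    apply comm_of_pow (e := e)
    · rw [he]; exact (Commute.refl c).pow_right 2
    · rw [hu]; exact (Nat.coprime_two_right.2 hodd).pow_right m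

lemma U1 (H : OCZ G z) {x u : G} (h1 : x ≠ 1) (ho : Odd (orderOf x)) (hxu : Commute x u)
    {k : ℕ} (hu : orderOf u = 2 ^ k) : k ≤ 2 := by
  obtain ⟨m, ⟨v, hv1, hv2⟩, h2, h3⟩ := exists_max (fun m => ∃ v, Commute x v ∧ orderOf v = 2 ^ m) k
    (Nat.card G) ⟨u, hxu, hu⟩ (fun m ⟨v, hv⟩ => ord_two_pow_le hv.2)
  refine h2.trans ?_
  by_contra hc
  refine H.no_big h1 ho hv1 (by omega) hv2 ?_
  intro w hw hw2
  have := h3 (m + 1) ⟨w, hw, hw2⟩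
  omega

/-- 2-elements commuting with a nontrivial odd element -/
lemma U1' (H : OCZ G z) {x u : G} (h1 : x ≠ 1) (ho : Odd (orderOf x)) (hxu : Commute x u)
    {k : ℕ} (hu : orderOf u = 2 ^ k) (hu1 : u ≠ 1) (huz : u ≠ z) : orderOf u = 4 ∧ u ^ 2 = z := by
  have hk := H.U1 h1 ho hxu hu
  have : k ≠ 0 := by rintro rfl; exact hu1 (orderOf_eq_one_iff.1 (by simpa using hu))
  have : k ≠ 1 := by rintro rfl; exact huz (H.step2 h1 ho (by simpa using hu) hxu)
  obtain rfl : k = 2 := by omega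
  refine ⟨by simpa using hu, ?_⟩
  simpa using H.z_of_pow h1 ho hxu (by norm_num) hu

lemma U2 (H : OCZ G z) {x i b : G} (h1 : x ≠ 1) (ho : Odd (orderOf x)) (hxi : Commute x i)
    (hi : orderOf i = 4) (hxb : Commute x b) (hbi : Commute b i) {k : ℕ} (hb : orderOf b = 2 ^ k) :
    b ∈ Subgroup.zpowers i := by
  refine H.sub_zp (m := 2) h1 ho hxi (by norm_num) (by rw [hi]; norm_num) ?_ k b hxb hbi
    (by rw [← hb, pow_orderOf_eq_one])
  intro v hv hv2
  have := H.U1 h1 ho hv hv2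
  omega

end OCZ

set_option linter.unusedSectionVars false
set_option linter.unusedVariables false

/-- `n` is the order of a nontrivial odd element commuting with an element of order 4 -/
def OCZ.Good (G : Type) [Group G] (n : ℕ) : Prop :=
  ∃ x i : G, orderOf x = n ∧ x ≠ 1 ∧ Odd n ∧ orderOf i = 4 ∧ Commute x i

namespace OCZ
variable {G : Type} [Group G] [Finite G] {z : G}

lemma claimA (H : OCZ G z) {x i : G} (h1 : x ≠ 1) (ho : Odd (orderOf x)) (hxi : Commute x i)
    (hi : orderOf i = 4) {k : ℕ} (hk : k.Coprime (orderOf x))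
    (hr : ∀ r, Odd r → ¬ k ^ r ≡ 1 [MOD orderOf x]) :
    ∃ g, Commute g i ∧ g * x * g⁻¹ = x ^ k ∧
      ∀ y, y ≠ 1 → Odd (orderOf y) → Commute y i → Commute g y → False := by
  obtain ⟨g, hg1, hg2⟩ := H.pairconj (x' := x ^ k) (y' := i) h1 ho hxi (hxi.pow_left k)
    (Nat.Coprime.orderOf_pow hk.symm) rfl
    (by rw [hi, show 4 = 2 ^ 2 by norm_num]; exact (Nat.coprime_two_right.2 ho).pow_right 2)
  refine ⟨g, comm_iff_conj.2 hg2, hg1, ?_⟩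
  intro y hy1 hyo hyi hgy
  obtain ⟨s, r, hro, hs1, hs2, -⟩ := two_part g
  have := H.U2 hy1 hyo hyi hi (hgy.symm.pow_right r) ((comm_iff_conj.2 hg2).pow_left r) hs2
  exact hr r hro ((comm_iter_iff hg1 r).1 (comm_of_mem this hxi).symm)

lemma claimB (H : OCZ G z) {x : G} (h1 : x ≠ 1) (ho : Odd (orderOf x))
    {k : ℕ} (hk : k.Coprime (orderOf x))
    (hr : ∀ r, Odd r → ¬ k ^ r ≡ 1 [MOD orderOf x]) :
    ∃ g s r, Odd r ∧ orderOf g = 2 ^ s * r ∧ orderOf (g ^ 2 ^ s) = r ∧ g * x * g⁻¹ = x ^ k ∧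
      ∀ y, y ≠ 1 → Odd (orderOf y) → Commute g y →
        Good G (orderOf y) ∧ k ^ (r * 2) ≡ 1 [MOD orderOf x] := by
  obtain ⟨g, hg⟩ := H.rational h1 (H.odd_ne h1 ho) hk
  obtain ⟨s, r, hro, hs1, hs2, hs3⟩ := two_part g
  refine ⟨g, s, r, hro, hs1, hs3, hg, ?_⟩
  intro y hy1 hyo hgy
  have hnc : ¬ Commute (g ^ r) x := fun h => hr r hro ((comm_iter_iff hg r).1 h)
  have hn1 : g ^ r ≠ 1 := fun h => hnc (h ▸ Commute.one_left x)
  have hn2 : g ^ r ≠ z := fun h => hnc (h ▸ H.comm x)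
  obtain ⟨h4, hz⟩ := H.U1' hy1 hyo (hgy.symm.pow_right r) hs2 hn1 hn2
  refine ⟨⟨y, g ^ r, rfl, hy1, hyo, h4, hgy.symm.pow_right r⟩, ?_⟩
  rw [← comm_iter_iff hg, pow_mul, hz]
  exact H.comm x

lemma ucast {n : ℕ} [NeZero n] (κ : (ZMod n)ˣ) (j : ℕ) :
    (κ : ZMod n).val ^ j ≡ 1 [MOD n] ↔ κ ^ j = 1 := by
  rw [← ZMod.natCast_eq_natCast_iff, Units.ext_iff]
  simp

lemma prime_pow_or {n : ℕ} (hn : 1 < n) : (∃ p e, p.Prime ∧ 1 ≤ e ∧ n = p ^ e) ∨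
    ∃ a b, 1 < a ∧ 1 < b ∧ a.Coprime b ∧ n = a * b := by
  have hp := Nat.minFac_prime hn.ne'
  obtain ⟨e, m, hm, h⟩ := Nat.exists_eq_pow_mul_and_not_dvd (n := n) (by omega) n.minFac hp.ne_one
  have he : e ≠ 0 := by
    rintro rfl
    have h' : n = m := by simpa using h
    exact hm (h' ▸ Nat.minFac_dvd n)
  by_cases h1 : m = 1
  · left; exact ⟨n.minFac, e, hp, by omega, by rw [h1, mul_one] at h; exact h⟩
  · right
    refine ⟨n.minFac ^ e, m, Nat.one_lt_pow he hp.one_lt, ?_, ?_, h⟩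
    · have : m ≠ 0 := by rintro rfl; simp at hm
      omega
    · exact ((Nat.Prime.coprime_iff_not_dvd hp).2 hm).pow_left e

lemma crtk {a b c : ℕ} (hab : a.Coprime b) (hc : c.Coprime a) :
    ∃ k, k ≡ c [MOD a] ∧ k ≡ 1 [MOD b] ∧ k.Coprime (a * b) := by
  obtain ⟨k, h1, h2⟩ := Nat.chineseRemainder hab c 1
  refine ⟨k, h1, h2, Nat.Coprime.mul_right ?_ ?_⟩
  · rw [Nat.Coprime, h1.gcd_eq]; exact hc
  · rw [Nat.Coprime, h2.gcd_eq]; simp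

lemma comm_crt {g x : G} {a b k : ℕ} (hx : orderOf x = a * b) (hg : g * x * g⁻¹ = x ^ k)
    (hk : k ≡ 1 [MOD b]) : Commute g (x ^ a) := by
  rw [comm_iff_conj, conj_pow' hg, ← pow_mul, pow_eq_pow_iff_modEq, hx, mul_comm k a]
  simpa using hk.mul_left' a

lemma ord_crt {x : G} {a b : ℕ} (ha : 0 < a) (hx : orderOf x = a * b) : orderOf (x ^ a) = b := by
  rw [orderOf_pow_of_dvd ha.ne' (hx ▸ dvd_mul_right a b), hx, Nat.mul_div_cancel_left _ ha]

lemma neg_pow_ne {a k r : ℕ} (ha : Odd a) (ha1 : 1 < a) (hk : k ≡ a - 1 [MOD a]) (hr : Odd r) :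
    ¬ k ^ r ≡ 1 [MOD a] := by
  intro h
  rw [← ZMod.natCast_eq_natCast_iff] at h hk
  have : ((a - 1 : ℕ) : ZMod a) = -1 := by
    rw [Nat.cast_sub ha1.le]; simp
  push_cast at h
  rw [hk, this, hr.neg_one_pow] at h
  have : ((2 : ℕ) : ZMod a) = 0 := by push_cast; linear_combination -h
  rw [ZMod.natCast_eq_zero_iff] at this
  have := Nat.le_of_dvd (by norm_num) this
  obtain rfl : a = 2 := by omega
  revert ha; decide

lemma good_units (H : OCZ G z) {n : ℕ} (hn : Good G n) [NeZero n] (κ : (ZMod n)ˣ)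
    (hr : ∀ r, Odd r → κ ^ r ≠ 1) : ∃ s, κ ^ 2 ^ s = 1 := by
  obtain ⟨x, i, rfl, h1, ho, hi, hxi⟩ := hn
  obtain ⟨g, hgi, hg, hy⟩ := H.claimA h1 ho hxi hi (ZMod.val_coe_unit_coprime κ)
    (fun r hro h => hr r hro ((ucast κ r).1 h))
  obtain ⟨s, r, hro, hs1, hs2, hs3⟩ := two_part g
  refine ⟨s, ?_⟩
  rw [← ucast, ← comm_iter_iff hg]
  by_contra hc
  have hne : g ^ 2 ^ s ≠ 1 := fun h => hc (h ▸ Commute.one_left x)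
  exact hy (g ^ 2 ^ s) hne (hs3 ▸ hro) (hgi.pow_left _) ((Commute.refl g).pow_right _)

lemma good_gt {n : ℕ} (hn : Good G n) : 3 ≤ n ∧ Odd n := by
  obtain ⟨x, i, rfl, h1, ho, hi, hxi⟩ := hn
  exact ⟨odd_ge h1 ho, ho⟩

lemma good_pgroup (H : OCZ G z) {n : ℕ} (hn : Good G n) : ∃ k, n.totient = 2 ^ k := by
  obtain ⟨h3, ho⟩ := good_gt hn
  have : NeZero n := ⟨by omega⟩
  have : Fact (2 < n) := ⟨h3⟩
  have hP : IsPGroup 2 (ZMod n)ˣ := by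
    intro κ
    by_cases h : ∀ r, Odd r → κ ^ r ≠ 1
    · exact H.good_units hn κ h
    · push Not at h
      obtain ⟨r, hr, hr1⟩ := h
      obtain ⟨s, hs⟩ := H.good_units hn (-κ) (by
        intro r' hr' h'
        have h2 : (-κ) ^ (r * r') = 1 := by rw [mul_comm, pow_mul, h', one_pow]
        rw [(hr.mul hr').neg_pow, pow_mul, hr1, one_pow] at h2
        have h3 := congrArg (Units.val) h2
        simp only [Units.val_neg, Units.val_one] at h3
        exact ZMod.neg_one_ne_one h3)
      refine ⟨s + 1, ?_⟩
      have : (-κ) ^ 2 ^ (s + 1) = 1 := by rw [pow_succ, pow_mul, hs, one_pow]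
      rwa [(Nat.even_pow.2 ⟨even_two, by omega⟩ : Even (2 ^ (s+1))).neg_pow] at this
  obtain ⟨k, hk⟩ := IsPGroup.iff_card.1 hP
  refine ⟨k, ?_⟩
  rw [← hk, Nat.card_eq_fintype_card, ZMod.card_units_eq_totient]

lemma prime_of_totient {p e k : ℕ} (hp : p.Prime) (hp2 : Odd p) (he : 1 ≤ e)
    (h : (p ^ e).totient = 2 ^ k) : e = 1 ∧ p = 2 ^ k + 1 := by
  rw [Nat.totient_prime_pow hp he] at h
  have : e = 1 := by
    by_contra hc
    have h1 : p ∣ 2 ^ k := by rw [← h]; exact (dvd_pow_self p (by omega)).mul_right _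
    have := (Nat.prime_dvd_prime_iff_eq hp Nat.prime_two).1 (hp.dvd_of_dvd_pow h1)
    rw [this] at hp2; revert hp2; decide
  subst this
  simp at h
  have := hp.two_le
  exact ⟨rfl, by omega⟩

lemma odd_of_pow {p e : ℕ} (h : Odd (p ^ e)) (he : e ≠ 0) : Odd p := by
  by_contra hc
  rw [Nat.not_odd_iff_even] at hc
  exact (Nat.not_odd_iff_even.2 (hc.pow_of_ne_zero he)) h

lemma M1 (H : OCZ G z) {n : ℕ} (hn : Good G n) : n.Prime ∧ ∃ k, n = 2 ^ k + 1 := by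
  obtain ⟨h3, ho⟩ := good_gt hn
  obtain ⟨k, hk⟩ := H.good_pgroup hn
  rcases prime_pow_or (n := n) (by omega) with ⟨p, e, hp, he, rfl⟩ | ⟨a, b, ha, hb, hab, rfl⟩
  · have hpo : Odd p := odd_of_pow ho (by omega)
    obtain ⟨rfl, h⟩ := prime_of_totient hp hpo he hk
    rw [pow_one]; exact ⟨hp, k, h⟩
  · exfalso
    obtain ⟨hao, hbo⟩ := Nat.odd_mul.1 ho
    obtain ⟨x, i, hx, h1, -, hi, hxi⟩ := hn
    obtain ⟨q, hq1, hq2, hq3⟩ := crtk (c := a - 1) hab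
      (by have h := Nat.coprime_self_sub_left ha.le; rw [h]; simp)
    obtain ⟨g, hgi, hg, hy⟩ := H.claimA h1 (hx ▸ ho) hxi hi (k := q) (hx ▸ hq3) (by
      rw [hx]
      intro r hr h
      exact neg_pow_ne hao ha hq1 hr (h.of_mul_right b))
    have hox := ord_crt (by omega) hx
    refine hy (x ^ a) ?_ (hox ▸ hbo) (hxi.pow_left a) (comm_crt hx hg hq2)
    intro h; rw [h, orderOf_one] at hox; omega

lemma coprime_good (H : OCZ G z) {x : G} {a b : ℕ} (ha : 1 < a) (hb : 1 < b) (hab : a.Coprime b)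
    (hx : orderOf x = a * b) (ho : Odd (a * b)) : Good G b := by
  obtain ⟨hao, hbo⟩ := Nat.odd_mul.1 ho
  have h1 : x ≠ 1 := by rintro rfl; rw [orderOf_one] at hx; nlinarith
  have hox := ord_crt (by omega) hx
  have hx1 : x ^ a ≠ 1 := by intro h; rw [h, orderOf_one] at hox; omega
  obtain ⟨q, hq1, hq2, hq3⟩ := crtk (c := a - 1) hab
    (by have h := Nat.coprime_self_sub_left ha.le; rw [h]; simp)
  obtain ⟨g, s, r, hro, hs1, hs3, hg, hy⟩ := H.claimB h1 (hx ▸ ho) (k := q) (hx ▸ hq3) (by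
    rw [hx]
    intro r hr h
    exact neg_pow_ne hao ha hq1 hr (h.of_mul_right b))
  have := (hy (x ^ a) hx1 (hox ▸ hbo) (comm_crt hx hg hq2)).1
  rwa [hox] at this

lemma coprime_no (H : OCZ G z) {x : G} {a b m : ℕ} (ha : 1 < a) (hb : 1 < b) (hab : a.Coprime b)
    (hx : orderOf x = a * b) (ho : Odd (a * b)) (hm : a = m ^ 2 + 1) : False := by
  obtain ⟨hao, hbo⟩ := Nat.odd_mul.1 ho
  have h1 : x ≠ 1 := by rintro rfl; rw [orderOf_one] at hx; nlinarith
  have hox := ord_crt (by omega) hx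
  have hx1 : x ^ a ≠ 1 := by intro h; rw [h, orderOf_one] at hox; omega
  obtain ⟨q, hq1, hq2, hq3⟩ := crtk (c := m) hab (by
    rw [hm, sq]; simp)
  have hq4 : q ^ 2 ≡ a - 1 [MOD a] := by
    have := hq1.pow 2
    rwa [show m ^ 2 = a - 1 by omega] at this
  obtain ⟨g, s, r, hro, hs1, hs3, hg, hy⟩ := H.claimB h1 (hx ▸ ho) (k := q) (hx ▸ hq3) (by
    rw [hx]
    intro r hr h
    apply neg_pow_ne hao ha hq4 hr
    have := (h.of_mul_right b).pow 2
    rwa [← pow_mul, mul_comm, pow_mul, one_pow] at this)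
  have := (hy (x ^ a) hx1 (hox ▸ hbo) (comm_crt hx hg hq2)).2
  rw [hx, mul_comm r 2, pow_mul] at this
  exact neg_pow_ne hao ha hq4 hro (this.of_mul_right b)

lemma fermat {k : ℕ} (hp : (2 ^ k + 1).Prime) (hk : Odd (2 ^ k + 1)) :
    2 ^ k + 1 = 3 ∨ 2 ^ k + 1 = 5 ∨ ∃ c, 1 ≤ c ∧ 2 ^ k + 1 = 16 ^ c + 1 := by
  have hk0 : k ≠ 0 := by rintro rfl; revert hk; decide
  have h3 : ∀ q, (3 : ℕ) ∣ 2 ^ (2 * q + 1) + 1 := by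
    intro q
    have := Odd.nat_add_dvd_pow_add_pow 2 1 (n := 2 * q + 1) ⟨q, rfl⟩
    simpa using this
  have h5 : ∀ q, (5 : ℕ) ∣ 4 ^ (2 * q + 1) + 1 := by
    intro q
    have := Odd.nat_add_dvd_pow_add_pow 4 1 (n := 2 * q + 1) ⟨q, rfl⟩
    simpa using this
  rcases Nat.even_or_odd' k with ⟨q, rfl | rfl⟩
  · rcases Nat.even_or_odd' q with ⟨c, rfl | rfl⟩
    · right; right
      refine ⟨c, by omega, ?_⟩
      rw [← mul_assoc, pow_mul]; norm_num
    · right; left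
      rw [pow_mul] at hp ⊢
      exact ((Nat.prime_dvd_prime_iff_eq (by norm_num) hp).1 (h5 c)).symm
  · left
    exact ((Nat.prime_dvd_prime_iff_eq (by norm_num) hp).1 (h3 q)).symm

lemma fermat' {n k : ℕ} (hn : n = 2 ^ k + 1) (hp : n.Prime) (hk : Odd n) :
    n = 3 ∨ n = 5 ∨ ∃ c, 1 ≤ c ∧ n = 16 ^ c + 1 := by
  subst hn; exact fermat hp hk

lemma M3 (H : OCZ G z) {x : G} (h1 : x ≠ 1) (ho : Odd (orderOf x)) :
    ((orderOf x).Prime ∧ ∃ k, orderOf x = 2 ^ k + 1) ∨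
    (∃ l, Good G l ∧ (orderOf x).Prime ∧ orderOf x = 2 * l + 1) ∨ (orderOf x = 9 ∧ Good G 3) := by
  have h3 := odd_ge h1 ho
  rcases prime_pow_or (n := orderOf x) (by omega) with ⟨p, e, hp, he, hx⟩ | ⟨a, b, ha, hb, hab, hx⟩
  · have hpo : Odd p := odd_of_pow (hx ▸ ho) (by omega)
    have hne2 : p ≠ 2 := by rintro rfl; revert hpo; decide
    have hcyc : IsCyclic (ZMod (orderOf x))ˣ := by
      rw [hx]; exact ZMod.isCyclic_units_of_prime_pow p hp hne2 e
    have : NeZero (orderOf x) := ⟨by omega⟩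
    obtain ⟨κ, hκ⟩ := hcyc.exists_generator
    have hoκ : orderOf κ = (orderOf x).totient := by
      rw [orderOf_eq_card_of_forall_mem_zpowers hκ, Nat.card_eq_fintype_card,
        ZMod.card_units_eq_totient]
    have heven : Even (orderOf κ) := by rw [hoκ]; exact Nat.totient_even h3
    have hodd : ∀ r, Odd r → κ ^ r ≠ 1 := by
      intro r hr h
      have := heven.two_dvd.trans (orderOf_dvd_of_pow_eq_one h)
      exact (Nat.not_even_iff_odd.2 hr) (even_iff_two_dvd.2 this)
    obtain ⟨g, s, r, hro, hs1, hs3, hg, hy⟩ := H.claimB h1 ho (ZMod.val_coe_unit_coprime κ)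
      (fun r hro h => hodd r hro ((ucast κ r).1 h))
    by_cases hg1 : g ^ 2 ^ s = 1
    · left
      have : κ ^ 2 ^ s = 1 := by
        rw [← ucast, ← comm_iter_iff hg, hg1]; exact Commute.one_left x
      have := orderOf_dvd_of_pow_eq_one this
      obtain ⟨k, -, hk⟩ := (Nat.dvd_prime_pow Nat.prime_two).1 this
      rw [hoκ, hx] at hk
      obtain ⟨rfl, h⟩ := prime_of_totient hp hpo he hk
      rw [hx, pow_one]; exact ⟨hp, k, h⟩
    · obtain ⟨hgood, hr2⟩ := hy (g ^ 2 ^ s) hg1 (hs3 ▸ hro) ((Commute.refl g).pow_right _)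
      rw [hs3] at hgood
      rw [ucast] at hr2
      have hdvd := orderOf_dvd_of_pow_eq_one hr2
      obtain ⟨hrp, -⟩ := H.M1 hgood
      obtain ⟨t, ht⟩ := heven.two_dvd
      rw [ht, mul_comm r 2] at hdvd
      have hdvd := Nat.dvd_of_mul_dvd_mul_left (by norm_num) hdvd
      rw [hoκ, hx, Nat.totient_prime_pow hp he] at ht
      rcases (Nat.dvd_prime hrp).1 hdvd with rfl | rfl
      · left
        obtain ⟨rfl, h⟩ := prime_of_totient (k := 1) hp hpo he
          (by rw [Nat.totient_prime_pow hp he, ht]; norm_num)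
        rw [hx, pow_one]; exact ⟨hp, 1, h⟩
      · right
        have hp2 := hp.two_le
        by_cases he1 : e = 1
        · left
          subst he1
          refine ⟨t, hgood, by rw [hx, pow_one]; exact hp, ?_⟩
          rw [hx]; simp at ht ⊢; omega
        · right
          have hpd : p ∣ 2 * t := by rw [← ht]; exact (dvd_pow_self p (by omega)).mul_right _
          have hpt : p = t := by
            rcases (Nat.Prime.dvd_mul hp).1 hpd with h | h
            · exact absurd ((Nat.prime_dvd_prime_iff_eq hp Nat.prime_two).1 h) hne2
            · exact (Nat.prime_dvd_prime_iff_eq hp hrp).1 h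
          subst hpt
          obtain ⟨e, rfl⟩ : ∃ f, e = f + 2 := ⟨e - 2, by omega⟩
          have h2 : p ^ e * (p - 1) = 2 := by
            have h5 : p * (p ^ e * (p - 1)) = p * 2 := by
              rw [mul_comm p 2, ← ht, show e + 2 - 1 = e + 1 by omega, pow_succ]; ring
            exact Nat.eq_of_mul_eq_mul_left hp.pos h5
          have hd : p - 1 ∣ 2 := ⟨p ^ e, by rw [mul_comm]; exact h2.symm⟩
          have hle := Nat.le_of_dvd (by norm_num) hd
          obtain rfl : p = 3 := by omega
          have he0 : e = 0 := by
            by_contra hc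
            have : 3 ∣ 2 := ⟨3 ^ (e - 1) * 2, by
              rw [← mul_assoc, ← pow_succ', show e - 1 + 1 = e by omega]; exact h2.symm⟩
            omega
          subst he0
          exact ⟨by rw [hx]; norm_num, hgood⟩
  · exfalso
    have ho' := hx ▸ ho
    have hx' : orderOf x = b * a := by rw [hx, mul_comm]
    have ho'' := hx' ▸ ho
    have hgb := H.coprime_good ha hb hab hx ho'
    have hga := H.coprime_good hb ha hab.symm hx' ho''
    have key : ∀ n, Good G n → n = 3 ∨ ∃ m, n = m ^ 2 + 1 := by
      intro n hn
      obtain ⟨hnp, k, hk⟩ := H.M1 hn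
      rcases fermat' hk hnp (good_gt hn).2 with h | h | ⟨c, hc, h⟩
      · exact Or.inl h
      · exact Or.inr ⟨2, by rw [h]; norm_num⟩
      · exact Or.inr ⟨4 ^ c, by rw [h, ← pow_mul, mul_comm, pow_mul]; norm_num⟩
    rcases key a hga with rfl | ⟨m, hm⟩
    · rcases key b hgb with rfl | ⟨m, hm⟩
      · revert hab; decide
      · exact H.coprime_no hb ha hab.symm hx' ho'' hm
    · exact H.coprime_no ha hb hab hx ho' hm

/-- the possible orders of nontrivial odd elements -/
lemma M4 (H : OCZ G z) {x : G} (h1 : x ≠ 1) (ho : Odd (orderOf x)) :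
    orderOf x = 3 ∨ orderOf x = 5 ∨ (orderOf x = 7 ∧ Good G 3) ∨ (orderOf x = 9 ∧ Good G 3) ∨
    (orderOf x = 11 ∧ Good G 5) ∨ ∃ c, 1 ≤ c ∧ orderOf x = 16 ^ c + 1 := by
  rcases H.M3 h1 ho with ⟨hp, k, hk⟩ | ⟨l, hl, hp, h⟩ | h
  · rcases fermat' hk hp ho with h | h | h
    · simp [h]
    · simp [h]
    · right; right; right; right; right; exact h
  · obtain ⟨hlp, k, hk⟩ := H.M1 hl
    rcases fermat' hk hlp (good_gt hl).2 with rfl | rfl | ⟨c, hc, h2⟩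
    · right; right; left; exact ⟨by omega, hl⟩
    · right; right; right; right; left; exact ⟨by omega, hl⟩
    · exfalso
      have h16 : 16 ^ c % 5 = 1 := by rw [Nat.pow_mod]; simp
      have hd : 5 ∣ orderOf x := by omega
      have h5 := (Nat.prime_dvd_prime_iff_eq (by norm_num) hp).1 hd
      have : 16 ≤ 16 ^ c := Nat.le_self_pow (by omega) 16
      omega
  · right; right; right; left; exact h

end OCZ

set_option linter.unusedSectionVars false
set_option linter.unusedVariables false

/-- order of the centralizer -/
noncomputable def OCZ.C {G : Type} [Group G] (x : G) : ℕ := Nat.card (Subgroup.centralizer {x})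

/-- number of elements outside `{1, z}` of order `n` -/
noncomputable def OCZ.N {G : Type} [Group G] (z : G) (n : ℕ) : ℕ :=
  Nat.card {g : G // g ≠ 1 ∧ g ≠ z ∧ orderOf g = n}

/-- proportion of such elements -/
noncomputable def OCZ.F {G : Type} [Group G] (z : G) (n : ℕ) : ℚ := OCZ.N z n / Nat.card G

namespace OCZ
variable {G : Type} [Group G] [Finite G] {z : G}

lemma mem_cent {x g : G} : g ∈ Subgroup.centralizer {x} ↔ Commute g x := by
  rw [Subgroup.mem_centralizer_singleton_iff]; exact Iff.rfl

lemma count (H : OCZ G z) {x : G} (h1 : x ≠ 1) (h2 : x ≠ z) :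
    N z (orderOf x) * C x ≤ Nat.card G := by
  have hc : ∀ h : {g : G // g ≠ 1 ∧ g ≠ z ∧ orderOf g = orderOf x}, ∃ g, g * x * g⁻¹ = h.1 :=
    fun h => H.conj x h.1 h1 h2 h.2.1 h.2.2.1 h.2.2.2.symm
  choose φ hφ using hc
  rw [N, C, ← Nat.card_prod]
  refine Nat.card_le_card_of_injective (fun p => φ p.1 * p.2.1) ?_
  rintro ⟨a, c⟩ ⟨b, d⟩ h
  simp only at h
  have key : ∀ a (c : Subgroup.centralizer {x}), (φ a * c.1) * x * (φ a * c.1)⁻¹ = a.1 := by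
    intro a c
    have : c.1 * x * c.1⁻¹ = x := comm_iff_conj.1 (mem_cent.1 c.2)
    calc (φ a * c.1) * x * (φ a * c.1)⁻¹ = φ a * (c.1 * x * c.1⁻¹) * (φ a)⁻¹ := by group
      _ = _ := by rw [this, hφ]
  have hab : a = b := by
    apply Subtype.ext
    rw [← key a c, ← key b d, h]
  subst hab
  rw [Prod.mk.injEq]
  exact ⟨rfl, Subtype.ext (mul_left_cancel h)⟩

lemma F_nonneg (n : ℕ) : 0 ≤ F z n := by unfold F; positivity

lemma F_le (H : OCZ G z) {n c : ℕ} (hc : 0 < c)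
    (h : ∀ x, x ≠ 1 → x ≠ z → orderOf x = n → c ≤ C x) : F z n ≤ 1 / c := by
  by_cases hex : ∃ x : G, x ≠ 1 ∧ x ≠ z ∧ orderOf x = n
  · obtain ⟨x, h1, h2, rfl⟩ := hex
    have h3 := H.count h1 h2
    have h4 : N z (orderOf x) * c ≤ Nat.card G := (Nat.mul_le_mul_left _ (h x h1 h2 rfl)).trans h3
    have hG : 0 < Nat.card G := Nat.card_pos
    unfold F
    rw [div_le_div_iff₀ (by exact_mod_cast hG) (by exact_mod_cast hc), one_mul]
    exact_mod_cast h4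
  · have : N z n = 0 := by
      unfold N
      have : IsEmpty {g : G // g ≠ 1 ∧ g ≠ z ∧ orderOf g = n} := ⟨fun g => hex ⟨g.1, g.2⟩⟩
      exact Nat.card_of_isEmpty
    unfold F; rw [this]; simp

lemma F_zero {n : ℕ} (h : ∀ x : G, x ≠ 1 → x ≠ z → orderOf x ≠ n) : F z n = 0 := by
  have : N z n = 0 := by
    unfold N
    have : IsEmpty {g : G // g ≠ 1 ∧ g ≠ z ∧ orderOf g = n} := ⟨fun g => h g.1 g.2.1 g.2.2.1 g.2.2.2⟩
    exact Nat.card_of_isEmpty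
  unfold F; rw [this]; simp

lemma two_card {A B : Subgroup G} (h : A < B) : 2 * Nat.card A ≤ Nat.card B := by
  obtain ⟨k, hk⟩ := Subgroup.card_dvd_of_le h.le
  have hA : 0 < Nat.card A := Nat.card_pos
  have hB : 0 < Nat.card B := Nat.card_pos
  have : k ≠ 0 := by rintro rfl; omega
  have : k ≠ 1 := by
    rintro rfl
    exact h.ne (Subgroup.eq_of_le_of_card_ge h.le (by rw [hk, mul_one]))
  rw [hk, mul_comm]; exact Nat.mul_le_mul_left _ (by omega)

lemma two_card' {A B : Subgroup G} (h : A ≤ B) {g : G} (hg : g ∈ B) (hg' : g ∉ A) :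
    2 * Nat.card A ≤ Nat.card B :=
  two_card (lt_of_le_of_ne h (by rintro rfl; exact hg' hg))

lemma C_pos (x : G) : 0 < C x := Nat.card_pos

lemma C_dvd (x : G) : C x ∣ Nat.card G := Subgroup.card_subgroup_dvd_card _

lemma ord_dvd_card {A : Subgroup G} {y : G} (h : y ∈ A) : orderOf y ∣ Nat.card A := by
  rw [← Nat.card_zpowers]
  exact Subgroup.card_dvd_of_le (by rwa [Subgroup.zpowers_le])

lemma ord_dvd_C {x y : G} (h : Commute y x) : orderOf y ∣ C x := ord_dvd_card (mem_cent.2 h)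

lemma two_C_le (H : OCZ G z) {x : G} (h1 : x ≠ 1) (h2 : x ≠ z) : 2 * C x ≤ Nat.card G := by
  have : ∃ g, ¬ Commute x g := by
    by_contra hc; push Not at hc
    rcases H.nc x hc with h | h <;> contradiction
  obtain ⟨g, hg⟩ := this
  have := two_card' (A := Subgroup.centralizer {x}) (B := ⊤) le_top (Subgroup.mem_top g)
    (fun h => hg (mem_cent.1 h).symm)
  rwa [Subgroup.card_top] at this

lemma div_lemma {A B : Subgroup G} (hAB : A ≤ B) {g : G} {p : ℕ} (hp : p.Prime) (hg : g ∈ B)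
    (hn : ∀ h ∈ A, g * h * g⁻¹ ∈ A) (hgA : g ∉ A) (hgp : g ^ p ∈ A) :
    p * Nat.card A ∣ Nat.card B := by
  have hgn : g ∈ Subgroup.normalizer (A : Set G) := by
    rw [Subgroup.mem_normalizer_iff]
    intro h
    refine ⟨hn h, fun hh => ?_⟩
    have hk : ∀ k : ℕ, ∀ h ∈ A, g ^ k * h * (g ^ k)⁻¹ ∈ A := by
      intro k
      induction k with
      | zero => intro h hh; simpa using hh
      | succ k ih =>
        intro h hh
        have := hn _ (ih h hh)
        rw [pow_succ']
        convert this using 1; group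
    have h2 := hk (orderOf g - 1) _ hh
    have h3 : g ^ (orderOf g - 1) = g⁻¹ := by
      rw [eq_inv_iff_mul_eq_one, ← pow_succ, Nat.sub_add_cancel (orderOf_pos g), pow_orderOf_eq_one]
    rw [h3] at h2
    convert h2 using 1; group
  set M : Subgroup G := Subgroup.normalizer (A : Set G) ⊓ B with hM
  have hAM : A ≤ M := le_inf Subgroup.le_normalizer hAB
  have hnorm : (A.subgroupOf M).Normal := Subgroup.normal_subgroupOf_of_le_normalizer inf_le_left
  have hgM : g ∈ M := ⟨hgn, hg⟩
  let q : M ⧸ A.subgroupOf M := QuotientGroup.mk ⟨g, hgM⟩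
  have hq1 : q ≠ 1 := by
    intro h
    rw [QuotientGroup.eq_one_iff] at h
    exact hgA (by simpa [Subgroup.mem_subgroupOf] using h)
  have hqp : q ^ p = 1 := by
    rw [← QuotientGroup.mk_pow, QuotientGroup.eq_one_iff]
    simpa [Subgroup.mem_subgroupOf] using hgp
  have : Fact p.Prime := ⟨hp⟩
  have hoq := orderOf_eq_prime hqp hq1
  have h1 : p ∣ Nat.card (M ⧸ A.subgroupOf M) := hoq ▸ orderOf_dvd_natCard q
  have h2 := Subgroup.card_eq_card_quotient_mul_card_subgroup (A.subgroupOf M)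
  rw [Nat.card_congr (Subgroup.subgroupOfEquivOfLe hAM).toEquiv] at h2
  refine dvd_trans ?_ (Subgroup.card_dvd_of_le (inf_le_right : M ≤ B))
  rw [h2]
  exact Nat.mul_dvd_mul_right h1 _

/-- squares of noncentral 2-elements -/
lemma C_sq (H : OCZ G z) {v : G} {i : ℕ} (hi : 1 ≤ i) (hv : orderOf v = 2 ^ (i + 1)) :
    2 * C v ≤ C (v ^ 2) := by
  have h4 : 4 ≤ orderOf v := by
    rw [hv, show 4 = 2 ^ 2 by norm_num]; exact Nat.pow_le_pow_right (by norm_num) (by omega)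
  obtain ⟨h1, h2⟩ := H.ne_of_ord (x := v) (by omega) (by omega)
  have hpe : Even (2 ^ i) := Nat.even_pow.2 ⟨even_two, by omega⟩
  obtain ⟨g, hg⟩ := H.rational h1 h2 (k := 1 + 2 ^ i)
    (by rw [hv]; exact (Nat.coprime_two_right.2 hpe.one_add).pow_right _)
  refine two_card' (g := g) ?_ (mem_cent.2 ?_) (fun h => ?_)
  · intro a ha; exact mem_cent.2 ((mem_cent.1 ha).pow_right 2)
  · rw [comm_iff_conj, conj_pow' hg, ← pow_mul, pow_eq_pow_iff_modEq, hv, add_mul, one_mul,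
      ← pow_succ]
    simp [Nat.ModEq]
  · have h5 := mem_cent.1 h
    rw [← pow_one g, comm_iter_iff hg 1, hv, pow_one] at h5
    have h6 := (Nat.modEq_iff_dvd' (by omega)).1 h5.symm
    rw [Nat.add_sub_cancel_left] at h6
    have := Nat.le_of_dvd (by positivity) h6
    rw [pow_succ] at this
    have := Nat.one_le_two_pow (n := i)
    omega

end OCZ

set_option linter.unusedSectionVars false
set_option linter.unusedVariables false

/-- contribution of `n, 2n, 4n` -/
noncomputable def OCZ.f {G : Type} [Group G] (z : G) (n : ℕ) : ℚ :=
  OCZ.F z n + OCZ.F z (2 * n) + OCZ.F z (4 * n)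

namespace OCZ
variable {G : Type} [Group G] [Finite G] {z : G}

lemma ord_conj (g x : G) : orderOf (g * x * g⁻¹) = orderOf x :=
  MulEquiv.orderOf_eq (MulAut.conj g) x

lemma ne_one_of_ord {x : G} {n : ℕ} (hn : 1 < n) (hx : orderOf x = n) : x ≠ 1 := by
  rintro rfl; rw [orderOf_one] at hx; omega

lemma C_odd (H : OCZ G z) {x : G} {n : ℕ} (hn : 1 < n) (ho : Odd n) (hx : orderOf x = n) :
    2 * n ∣ C x := by
  have h : Commute (x * z) x := (Commute.refl x).mul_left (H.comm x)
  have h2 := ord_dvd_C h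
  rwa [Commute.orderOf_mul_eq_mul_orderOf_of_coprime (H.comm x).symm
    (by rw [hx, H.ordz]; exact Nat.coprime_two_right.2 ho), hx, H.ordz, mul_comm] at h2

lemma ord_sq {g : G} {n k : ℕ} (hk : 0 < k) (hg : orderOf g = k * n) : orderOf (g ^ k) = n :=
  ord_crt hk hg

lemma C_double (H : OCZ G z) {g : G} {n : ℕ} (hn : 1 < n) (ho : Odd n) (hg : orderOf g = 2 * n) :
    C (g ^ 2) ≤ C g := by
  have h2 : orderOf (g ^ 2) = n := ord_sq (by norm_num) hg
  have hz : g ^ n = z := by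
    refine H.step2 (ne_one_of_ord hn h2) (h2 ▸ ho) ?_ (((Commute.refl g).pow_left 2).pow_right n)
    exact ord_sq (by omega) (by rw [hg, mul_comm])
  refine Nat.le_of_dvd (C_pos g) (Subgroup.card_dvd_of_le ?_)
  intro a ha
  rw [mem_cent] at ha ⊢
  obtain ⟨q, hq⟩ := ho
  have : g = ((g ^ 2) ^ q)⁻¹ * z := by
    rw [← hz, hq, pow_succ g (2 * q), pow_mul]; group
  rw [this]
  exact (ha.pow_right q).inv_right.mul_right (H.comm a).symm

lemma F_double (H : OCZ G z) {n c : ℕ} (hn : 1 < n) (ho : Odd n) (hc : 0 < c)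
    (h : ∀ x : G, orderOf x = n → c ≤ C x) : F z (2 * n) ≤ 1 / c := by
  refine H.F_le hc ?_
  intro g h1 h2 hg
  exact (h _ (ord_sq (by norm_num) hg)).trans (H.C_double hn ho hg)

lemma good_of_four {g : G} {n : ℕ} (hn : 1 < n) (ho : Odd n) (hg : orderOf g = 4 * n) : Good G n := by
  have h4 : orderOf (g ^ 4) = n := ord_sq (by norm_num) hg
  exact ⟨g ^ 4, g ^ n, h4, ne_one_of_ord hn h4, ho,
    ord_sq (by omega) (by rw [hg, mul_comm]), ((Commute.refl g).pow_left 4).pow_right n⟩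

lemma F_four (H : OCZ G z) {n : ℕ} (hn : 1 < n) (ho : Odd n) (h : ¬ Good G n) :
    F z (4 * n) = 0 :=
  F_zero (fun g _ _ hg => h (good_of_four hn ho hg))

lemma F_four' (H : OCZ G z) {n : ℕ} (hn : 1 < n) :
    F z (4 * n) ≤ 1 / ((4 * n : ℕ) : ℚ) := by
  refine H.F_le (by omega) (fun g _ _ hg => ?_)
  exact Nat.le_of_dvd (C_pos g) (hg ▸ ord_dvd_C (Commute.refl g))

lemma F_pair (H : OCZ G z) {n c : ℕ} (hn : 1 < n) (ho : Odd n) (hc : 0 < c)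
    (h : ∀ x : G, orderOf x = n → c ≤ C x) : F z n + F z (2 * n) ≤ 2 / c := by
  have h1 := H.F_double hn ho hc h
  have h2 : F z n ≤ 1 / c := H.F_le hc (fun x _ _ hx => h x hx)
  have : (2 : ℚ) / c = 1 / c + 1 / c := by ring
  linarith

lemma good_all (H : OCZ G z) {n : ℕ} (h : Good G n) {x : G} (hx : orderOf x = n) :
    ∃ i, orderOf i = 4 ∧ Commute x i := by
  obtain ⟨y, i, hy, h1, ho, hi, hyi⟩ := h
  have hn := odd_ge h1 (hy ▸ ho)
  obtain ⟨n3, n4⟩ := H.ne_of_ord (x := x) (by omega) (by omega)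
  obtain ⟨g, hg⟩ := H.conj y x h1 (H.odd_ne h1 (hy ▸ ho)) n3 n4 (by rw [hx, hy])
  refine ⟨g * i * g⁻¹, ?_, ?_⟩
  · rw [← hi]
    exact ord_conj g i
  · rw [← hg]
    show _ * _ = _ * _
    have := hyi.eq
    calc g * y * g⁻¹ * (g * i * g⁻¹) = g * (y * i) * g⁻¹ := by group
      _ = _ := by rw [this]; group

lemma good_inv (H : OCZ G z) {x i : G} (h1 : x ≠ 1) (ho : Odd (orderOf x)) (hi : orderOf i = 4)
    (hxi : Commute x i) : ∃ j, Commute x j ∧ j * i * j⁻¹ = i ^ 3 := by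
  obtain ⟨g, hg1, hg2⟩ := H.pairconj (x' := x) (y' := i ^ 3) h1 ho hxi (hxi.pow_right 3)
    rfl (Nat.Coprime.orderOf_pow (by rw [hi]; norm_num))
    (by rw [hi, show 4 = 2 ^ 2 by norm_num]; exact (Nat.coprime_two_right.2 ho).pow_right 2)
  exact ⟨g, (comm_iff_conj.2 hg1).symm, hg2⟩

lemma C_good (H : OCZ G z) {n : ℕ} (h : Good G n) {x : G} (hx : orderOf x = n) : 8 * n ≤ C x := by
  obtain ⟨h3, ho⟩ := good_gt h
  obtain ⟨i, hi, hxi⟩ := H.good_all h hx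
  have h1 := ne_one_of_ord (by omega) hx
  obtain ⟨j, hj1, hj2⟩ := H.good_inv h1 (hx ▸ ho) hi hxi
  have hA : 4 * n ∣ Nat.card (Subgroup.centralizer {x} ⊓ Subgroup.centralizer {i} : Subgroup G) := by
    have : orderOf (x * i) = 4 * n := by
      rw [Commute.orderOf_mul_eq_mul_orderOf_of_coprime hxi, hx, hi, mul_comm]
      rw [hx, hi, show 4 = 2 ^ 2 by norm_num]; exact (Nat.coprime_two_right.2 ho).pow_right 2
    rw [← this]
    apply ord_dvd_card
    rw [Subgroup.mem_inf, mem_cent, mem_cent]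
    exact ⟨(Commute.refl x).mul_left hxi.symm, hxi.mul_left (Commute.refl i)⟩
  have hle := Nat.le_of_dvd Nat.card_pos hA
  have := two_card' (A := Subgroup.centralizer {x} ⊓ Subgroup.centralizer {i})
    (B := Subgroup.centralizer {x}) inf_le_left (g := j) (mem_cent.2 hj1.symm) (by
      rw [Subgroup.mem_inf, mem_cent, mem_cent]
      rintro ⟨-, h⟩
      rw [← pow_one j, comm_iter_iff hj2 1, hi] at h
      revert h; decide)
  unfold C; omega

lemma f_le (H : OCZ G z) {n : ℕ} (hn : 1 < n) (ho : Odd n) : f z n ≤ 1 / n := by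
  have hn0 : (0 : ℚ) < n := by exact_mod_cast (by omega : 0 < n)
  unfold f
  by_cases h : Good G n
  · have h1 := H.F_pair hn ho (c := 8 * n) (by omega) (fun x hx => H.C_good h hx)
    have h2 := H.F_four' hn
    push_cast at h1 h2
    have e1 : (2 : ℚ) / (8 * n) = (1 / 4) * (1 / n) := by field_simp; norm_num
    have e2 : (1 : ℚ) / (4 * n) = (1 / 4) * (1 / n) := by field_simp
    have : (0 : ℚ) < 1 / n := by positivity
    linarith
  · have h1 := H.F_pair hn ho (c := 2 * n) (by omega)
      (fun x hx => Nat.le_of_dvd (C_pos x) (H.C_odd hn ho hx))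
    have h2 := H.F_four hn ho h
    push_cast at h1
    have e1 : (2 : ℚ) / (2 * n) = (1 / n) := by field_simp
    linarith

lemma f_good (H : OCZ G z) {n : ℕ} (h : Good G n) : f z n ≤ 1 / (2 * n) := by
  obtain ⟨h3, ho⟩ := good_gt h
  have hn0 : (0 : ℚ) < n := by exact_mod_cast (by omega : 0 < n)
  unfold f
  have h1 := H.F_pair (by omega) ho (c := 8 * n) (by omega) (fun x hx => H.C_good h hx)
  have h2 := H.F_four' (n := n) (by omega)
  push_cast at h1 h2
  have e1 : (2 : ℚ) / (8 * n) = (1 / 4) * (1 / n) := by field_simp; norm_num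
  have e2 : (1 : ℚ) / (4 * n) = (1 / 4) * (1 / n) := by field_simp
  have e3 : (1 : ℚ) / (2 * n) = (1 / 2) * (1 / n) := by field_simp
  linarith

lemma f_zero {n : ℕ} (h : ∀ x : G, orderOf x ≠ n) : f z n = 0 := by
  unfold f
  rw [F_zero (fun x _ _ => h x), F_zero (n := 2 * n) (fun x _ _ hx => h _ (ord_sq (by norm_num) hx)),
    F_zero (n := 4 * n) (fun x _ _ hx => h _ (ord_sq (by norm_num) hx))]
  norm_num

lemma f_nonneg (n : ℕ) : 0 ≤ f z n := by
  unfold f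
  have := F_nonneg (z := z) n
  have := F_nonneg (z := z) (2 * n)
  have := F_nonneg (z := z) (4 * n)
  linarith

lemma conj_exists (H : OCZ G z) {x y : G} {n k : ℕ} (hn : 1 < n) (ho : Odd n) (hx : orderOf x = n)
    (hk : 0 < k) (hy : orderOf y = k * n) : ∃ y', orderOf y' = k * n ∧ y' ^ k = x := by
  have h1 := ne_one_of_ord hn hx
  have hyk := ord_sq hk hy
  have h2 := ne_one_of_ord hn hyk
  obtain ⟨g, hg⟩ := H.conj _ _ h2 (H.odd_ne h2 (hyk ▸ ho)) h1 (H.odd_ne h1 (hx ▸ ho)) (by rw [hyk, hx])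
  refine ⟨g * y * g⁻¹, ?_, ?_⟩
  · rw [← hy]
    exact ord_conj g y
  · rw [conj_pow, hg]

lemma eight_dvd (H : OCZ G z) {n : ℕ} (h : Good G n) {x : G} (hx : orderOf x = n) : 8 ∣ C x := by
  obtain ⟨h3, ho⟩ := good_gt h
  obtain ⟨i, hi, hxi⟩ := H.good_all h hx
  have h1 := ne_one_of_ord (by omega) hx
  obtain ⟨j, hj1, hj2⟩ := H.good_inv h1 (hx ▸ ho) hi hxi
  obtain ⟨s, r, hr, hs1, hs2, -⟩ := two_part j
  have hc : Commute x (j ^ r) := hj1.pow_right r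
  have hj3 := conj_iter hj2 r
  have key : 2 * Nat.card (Subgroup.zpowers i) ∣ Nat.card (Subgroup.centralizer {x}) := by
    refine div_lemma (g := j ^ r) ?_ Nat.prime_two (mem_cent.2 hc.symm) ?_ ?_ ?_
    · rw [Subgroup.zpowers_le]; exact mem_cent.2 hxi.symm
    · rintro _ ⟨k, rfl⟩
      simp only
      rw [← conj_zpow, hj3]
      exact zpow_mem (Subgroup.npow_mem_zpowers _ _) _
    · intro hm
      have := (comm_of_mem hm (Commute.refl i)).symm
      rw [comm_iter_iff hj2, hi] at this
      obtain ⟨q, rfl⟩ := hr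
      rw [pow_succ, pow_mul] at this
      have h9 : (3 ^ 2) ^ q ≡ 1 [MOD 4] := by
        have : 3 ^ 2 ≡ 1 [MOD 4] := by decide
        simpa using this.pow q
      have := (h9.symm.mul_right 3).trans this
      revert this; decide
    · refine H.U2 h1 (hx ▸ ho) hxi hi (hc.pow_right 2) ?_ (k := s - 1) ?_
      · rw [← pow_mul, mul_comm, pow_mul]
        refine Commute.pow_left ?_ r
        rw [comm_iter_iff hj2, hi]; decide
      · have hs0 : s ≠ 0 := by
          rintro rfl
          rw [pow_zero, orderOf_eq_one_iff] at hs2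
          have := comm_iter_iff hj2 r
          rw [hs2, hi] at this
          have := this.1 (Commute.one_left i)
          obtain ⟨q, rfl⟩ := hr
          rw [pow_succ, pow_mul] at this
          have h9 : (3 ^ 2) ^ q ≡ 1 [MOD 4] := by
            have : 3 ^ 2 ≡ 1 [MOD 4] := by decide
            simpa using this.pow q
          have := (h9.symm.mul_right 3).trans this
          revert this; decide
        refine ord_sq (by norm_num) ?_
        rw [hs2, ← pow_succ']; congr 1; omega
  rw [Nat.card_zpowers, hi] at key
  exact key

lemma nine (H : OCZ G z) (h : Good G 3) {y : G} (hy : orderOf y = 9) {x : G} (hx : orderOf x = 3) :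
    216 ∣ C x := by
  obtain ⟨y, hy, hyx⟩ := H.conj_exists (n := 3) (k := 3) (by norm_num) (by decide) hx (by norm_num) hy
  norm_num at hy
  have h8 := H.eight_dvd h hx
  obtain ⟨hy1, hyz⟩ := H.ne_of_ord (x := y) (by omega) (by omega)
  obtain ⟨g, hg⟩ := H.rational hy1 hyz (k := 4) (by rw [hy]; norm_num)
  have h27 : 3 * Nat.card (Subgroup.centralizer {y}) ∣ Nat.card (Subgroup.centralizer {x}) := by
    refine div_lemma (g := g) ?_ Nat.prime_three (mem_cent.2 ?_) ?_ ?_ ?_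
    · intro a ha; rw [mem_cent] at ha ⊢; rw [← hyx]; exact ha.pow_right 3
    · rw [← hyx, comm_iff_conj, conj_pow' hg, ← pow_mul, pow_eq_pow_iff_modEq, hy]; decide
    · intro a ha
      rw [mem_cent] at ha ⊢
      apply comm_of_pow (e := 4) _ (by rw [hy]; norm_num)
      rw [← hg]
      show _ * _ = _ * _
      calc g * a * g⁻¹ * (g * y * g⁻¹) = g * (a * y) * g⁻¹ := by group
        _ = _ := by rw [ha.eq]; group
    · rw [mem_cent, ← pow_one g, comm_iter_iff hg, hy]; decide
    · rw [mem_cent, comm_iter_iff hg, hy]; decide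
  have h9 : 9 ∣ Nat.card (Subgroup.centralizer {y}) := hy ▸ ord_dvd_C (Commute.refl y)
  have : 27 ∣ C x := (by simpa using Nat.mul_dvd_mul_left 3 h9 : 27 ∣ _).trans h27
  have := Nat.Coprime.mul_dvd_of_dvd_of_dvd (by norm_num) h8 this
  simpa using this

lemma f_nine (H : OCZ G z) (h : Good G 3) {y : G} (hy : orderOf y = 9) :
    f z 3 ≤ 1 / 108 + 1 / 12 ∧ 216 ≤ Nat.card G := by
  constructor
  · have h1 := H.F_pair (n := 3) (by norm_num) (by decide) (c := 216) (by norm_num)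
      (fun x hx => Nat.le_of_dvd (C_pos x) (H.nine h hy hx))
    have h2 := H.F_four' (n := 3) (by norm_num)
    unfold f
    norm_num at h1 h2 ⊢
    linarith
  · have hx : orderOf (y ^ 3) = 3 := ord_sq (by norm_num) (by rw [hy])
    exact Nat.le_of_dvd Nat.card_pos ((H.nine h hy hx).trans (C_dvd _))

end OCZ

set_option linter.unusedSectionVars false
set_option linter.unusedVariables false

namespace OCZ
variable {G : Type} [Group G] [Finite G] {z : G}

lemma F_le1 (H : OCZ G z) {c : ℕ} (hc : 0 < c) {x : G} (h1 : x ≠ 1) (h2 : x ≠ z)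
    (h : c ≤ C x) : F z (orderOf x) ≤ 1 / c := by
  have h3 := H.count h1 h2
  have h4 : N z (orderOf x) * c ≤ Nat.card G := (Nat.mul_le_mul_left _ h).trans h3
  have hG : 0 < Nat.card G := Nat.card_pos
  unfold F
  rw [div_le_div_iff₀ (by exact_mod_cast hG) (by exact_mod_cast hc), one_mul]
  exact_mod_cast h4

/-- union bound -/
lemma cover {ι : Type} (s : Finset ι) (o : ι → ℕ)
    (h : ∀ g : G, g ≠ 1 → g ≠ z → ∃ i ∈ s, orderOf g = o i) :
    1 ≤ 2 / (Nat.card G : ℚ) + ∑ i ∈ s, F z (o i) := by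
  classical
  have := Fintype.ofFinite G
  have hG : (0 : ℚ) < Nat.card G := by exact_mod_cast Nat.card_pos
  have key : Nat.card G ≤ 2 + ∑ i ∈ s, N z (o i) := by
    have hsub : (Finset.univ : Finset G) ⊆ {1, z} ∪ s.biUnion
        (fun i => Finset.univ.filter (fun g : G => g ≠ 1 ∧ g ≠ z ∧ orderOf g = o i)) := by
      intro g _
      by_cases h1 : g = 1
      · simp [h1]
      by_cases h2 : g = z
      · simp [h2]
      obtain ⟨i, hi, hg⟩ := h g h1 h2
      simp only [Finset.mem_union, Finset.mem_biUnion, Finset.mem_filter]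
      exact Or.inr ⟨i, hi, Finset.mem_univ _, h1, h2, hg⟩
    have h1 := Finset.card_le_card hsub
    have h2 := Finset.card_union_le ({1, z} : Finset G) (s.biUnion
        (fun i => Finset.univ.filter (fun g : G => g ≠ 1 ∧ g ≠ z ∧ orderOf g = o i)))
    have h3 : (s.biUnion (fun i => Finset.univ.filter
        (fun g : G => g ≠ 1 ∧ g ≠ z ∧ orderOf g = o i))).card ≤ ∑ i ∈ s, N z (o i) := by
      refine Finset.card_biUnion_le.trans (Finset.sum_le_sum fun i _ => ?_)
      unfold N
      rw [Nat.card_eq_fintype_card, Fintype.card_subtype]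
    have h4 := Finset.card_le_two (a := (1 : G)) (b := z)
    rw [Nat.card_eq_fintype_card, ← Finset.card_univ]
    omega
  have e : 2 / (Nat.card G : ℚ) + ∑ i ∈ s, F z (o i) =
      ((2 + ∑ i ∈ s, N z (o i) : ℕ) : ℚ) / Nat.card G := by
    unfold F
    rw [← Finset.sum_div]; push_cast; ring
  rw [e, le_div_iff₀ hG, one_mul]
  exact_mod_cast key

lemma total (H : OCZ G z) {m : ℕ} (hm : ∀ (u : G) (k : ℕ), orderOf u = 2 ^ k → k ≤ m) :
    1 ≤ 2 / (Nat.card G : ℚ) + (∑ i ∈ Finset.Icc 1 m, F z (2 ^ i)) +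
      (f z 3 + f z 7 + f z 9) + (f z 5 + f z 11) +
      ∑ c ∈ Finset.Icc 1 (Nat.card G), f z (16 ^ c + 1) := by
  let q : ℕ ⊕ ℕ → ℕ := Sum.elim id (fun c => 16 ^ c + 1)
  let o : ℕ ⊕ ((ℕ ⊕ ℕ) × ℕ) → ℕ := Sum.elim (fun i => 2 ^ i) (fun p => 2 ^ p.2 * q p.1)
  let T : Finset (ℕ ⊕ ℕ) := ({3, 5, 7, 9, 11} : Finset ℕ).disjSum (Finset.Icc 1 (Nat.card G))
  let s : Finset (ℕ ⊕ ((ℕ ⊕ ℕ) × ℕ)) := (Finset.Icc 1 m).disjSum (T ×ˢ Finset.range 3)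
  have hc := cover (z := z) s o (by
    intro g h1 h2
    obtain ⟨k, r, hr, hg, hk, hro⟩ := two_part g
    by_cases hr1 : r = 1
    · refine ⟨Sum.inl k, ?_, ?_⟩
      · simp only [s, Finset.inl_mem_disjSum, Finset.mem_Icc]
        refine ⟨?_, hm _ k hk⟩
        by_contra hc
        obtain rfl : k = 0 := by omega
        apply h1
        rw [← orderOf_eq_one_iff, hg, hr1]; norm_num
      · simp only [o, Sum.elim_inl]; rw [hg, hr1, mul_one]
    · have hx1 : g ^ 2 ^ k ≠ 1 := by
        intro h; rw [h, orderOf_one] at hro; exact hr1 hro.symm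
      have hk2 := H.U1 hx1 (hro ▸ hr) (((Commute.refl g).pow_left _).pow_right r) hk
      have hM := H.M4 hx1 (hro ▸ hr)
      rw [hro] at hM
      have hT : ∃ t ∈ T, r = q t := by
        have hl : r ∈ ({3, 5, 7, 9, 11} : Finset ℕ) → ∃ t ∈ T, r = q t := fun h =>
          ⟨Sum.inl r, Finset.inl_mem_disjSum.2 h, rfl⟩
        rcases hM with h | h | h | h | h | ⟨c, hc, h⟩
        · apply hl; simp [h]
        · apply hl; simp [h]
        · apply hl; simp [h.1]
        · apply hl; simp [h.1]
        · apply hl; simp [h.1]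
        · refine ⟨Sum.inr c, Finset.inr_mem_disjSum.2 (Finset.mem_Icc.2 ⟨hc, ?_⟩), h⟩
          have h5 : r ≤ Nat.card G :=
            Nat.le_of_dvd Nat.card_pos (hro ▸ orderOf_dvd_natCard (g ^ 2 ^ k))
          have h6 : c < 16 ^ c := Nat.lt_pow_self (by norm_num)
          omega
      obtain ⟨t, ht, hrt⟩ := hT
      refine ⟨Sum.inr (t, k), ?_, ?_⟩
      · simp only [s, Finset.inr_mem_disjSum, Finset.mem_product, Finset.mem_range]
        exact ⟨ht, by omega⟩
      · simp only [o, Sum.elim_inr]; rw [hg, hrt])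
  have e1 : ∑ i ∈ s, F z (o i) = (∑ i ∈ Finset.Icc 1 m, F z (2 ^ i)) +
      ((f z 3 + f z 7 + f z 9) + (f z 5 + f z 11) +
      ∑ c ∈ Finset.Icc 1 (Nat.card G), f z (16 ^ c + 1)) := by
    have e2 : ∀ t, ∑ a ∈ Finset.range 3, F z (2 ^ a * q t) = f z (q t) := by
      intro t
      simp [Finset.sum_range_succ, f]
    simp only [s, Finset.sum_disjSum, Finset.sum_product, o, Sum.elim_inl, Sum.elim_inr, e2, T]
    simp [q]
    ring
  rw [e1] at hc
  linarith

lemma tail_le (H : OCZ G z) (B : ℕ) : ∑ c ∈ Finset.Icc 1 B, f z (16 ^ c + 1) ≤ 1 / 15 := by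
  have h1 : ∑ c ∈ Finset.Icc 1 B, f z (16 ^ c + 1) ≤ ∑ c ∈ Finset.Icc 1 B, 1 / (16 : ℚ) ^ c := by
    refine Finset.sum_le_sum fun c hc => ?_
    have hc1 := (Finset.mem_Icc.1 hc).1
    have hp : 0 < 16 ^ c := by positivity
    refine (H.f_le (n := 16 ^ c + 1) (by omega)
      (Even.add_one (Nat.even_pow.2 ⟨by decide, by omega⟩))).trans ?_
    push_cast
    apply one_div_le_one_div_of_le (by positivity) (by linarith)
  have h2 : ∀ B, ∑ c ∈ Finset.Icc 1 B, 1 / (16 : ℚ) ^ c = 1 / 15 - 1 / 15 * (1 / 16 ^ B) := by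
    intro B
    induction B with
    | zero => simp
    | succ B ih =>
      rw [Finset.sum_Icc_succ_top (by omega), ih, pow_succ]; field_simp; ring
  rw [h2] at h1
  have : (0 : ℚ) ≤ 1 / 15 * (1 / 16 ^ B) := by positivity
  linarith

lemma tail_zero {B : ℕ} (h : ∀ (x : G) (c : ℕ), 1 ≤ c → orderOf x ≠ 16 ^ c + 1) :
    ∑ c ∈ Finset.Icc 1 B, f z (16 ^ c + 1) = 0 :=
  Finset.sum_eq_zero fun c hc => f_zero fun x => h x c (Finset.mem_Icc.1 hc).1

lemma z_pow (H : OCZ G z) {u : G} {m : ℕ} (hm : 1 ≤ m) (hu : orderOf u = 2 ^ m)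
    (hz : z ∈ Subgroup.zpowers u) : u ^ 2 ^ (m - 1) = z := by
  rw [← mem_powers_iff_mem_zpowers] at hz
  obtain ⟨e, he⟩ := hz
  simp only at he
  have h1 : u ^ (e * 2) = 1 := by rw [pow_mul, he, sq, H.zz]
  have h2 := orderOf_dvd_of_pow_eq_one h1
  rw [hu, show m = (m - 1) + 1 by omega, pow_succ] at h2
  obtain ⟨t, rfl⟩ := Nat.dvd_of_mul_dvd_mul_right (by norm_num) h2
  have h3 : (u ^ 2 ^ (m - 1)) ^ 2 = 1 := by
    rw [← pow_mul, ← pow_succ, show m - 1 + 1 = m by omega, ← hu, pow_orderOf_eq_one]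
  rw [pow_mul] at he
  rcases Nat.even_or_odd' t with ⟨q, rfl | rfl⟩
  · rw [pow_mul, h3, one_pow] at he; exact absurd he.symm H.z_ne
  · rw [pow_succ, pow_mul, h3, one_pow, one_mul] at he; exact he

lemma C_not_mem (H : OCZ G z) {u : G} (hz : z ∉ Subgroup.zpowers u) : 2 * orderOf u ≤ C u := by
  rw [← Nat.card_zpowers]
  refine two_card' (g := z) ?_ (mem_cent.2 (H.comm u)) hz
  rw [Subgroup.zpowers_le]; exact mem_cent.2 (Commute.refl u)

lemma C_invol (H : OCZ G z) {t : G} (ht : orderOf t = 2) (htz : t ≠ z) : 4 ≤ C t := by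
  have := H.C_not_mem (u := t) (fun h => htz (by
    simpa using H.z_pow (m := 1) le_rfl (by rw [ht]; norm_num) h))
  omega

lemma F_two (H : OCZ G z) : F z 2 ≤ 1 / 4 := by
  have := H.F_le (n := 2) (c := 4) (by norm_num) (fun x _ h2 hx => H.C_invol hx h2)
  exact_mod_cast this

lemma card_ge (H : OCZ G z) {x : G} (h1 : x ≠ 1) (h2 : x ≠ z) : 6 ≤ Nat.card G := by
  have h3 := H.two_C_le h1 h2
  have h4 : 3 ≤ C x := by
    by_cases h : orderOf x = 2
    · exact le_trans (by norm_num) (H.C_invol h h2)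
    · have := orderOf_pos x
      have : orderOf x ≠ 1 := by rwa [Ne, orderOf_eq_one_iff]
      have := Nat.le_of_dvd (C_pos x) (ord_dvd_C (Commute.refl x))
      omega
  omega

lemma chain (H : OCZ G z) {u : G} {m : ℕ} (hu : orderOf u = 2 ^ m) (j : ℕ) (hj : j + 1 ≤ m) :
    2 ^ j * C u ≤ C (u ^ 2 ^ j) := by
  induction j with
  | zero => simp
  | succ j ih =>
    have h1 := ih (by omega)
    have h2 := H.C_sq (v := u ^ 2 ^ j) (i := m - j - 1) (by omega) (by
      have := ord_pow_two hu (j := m - j) (by omega)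
      rw [show m - (m - j) = j by omega] at this
      rw [this]; congr 1; omega)
    rw [← pow_mul, ← pow_succ] at h2
    calc 2 ^ (j + 1) * C u = 2 * (2 ^ j * C u) := by ring
      _ ≤ _ := by omega

lemma F_chain (H : OCZ G z) {u : G} {m i c : ℕ} (hu : orderOf u = 2 ^ m) (hi : 1 ≤ i) (him : i ≤ m)
    (hz : u ^ 2 ^ (m - i) ≠ z) (hc : 2 ^ c ≤ C u) : F z (2 ^ i) ≤ 2 ^ i / 2 ^ (m + c) := by
  have ho := ord_pow_two hu him
  have h1 : u ^ 2 ^ (m - i) ≠ 1 := ne_one_of_ord (Nat.one_lt_two_pow (by omega)) ho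
  have h2 := H.chain hu (m - i) (by omega)
  have h3 : 2 ^ (m - i) * 2 ^ c ≤ C (u ^ 2 ^ (m - i)) := (Nat.mul_le_mul_left _ hc).trans h2
  have h4 := H.F_le1 (by positivity) h1 hz h3
  rw [ho] at h4
  refine h4.trans (le_of_eq ?_)
  obtain ⟨d, rfl⟩ : ∃ d, m = i + d := ⟨m - i, by omega⟩
  rw [Nat.add_sub_cancel_left]
  push_cast
  rw [pow_add, pow_add]; field_simp

lemma sum_two (m : ℕ) : ∑ i ∈ Finset.Icc 1 m, (2 : ℚ) ^ i = 2 * 2 ^ m - 2 := by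
  induction m with
  | zero => simp
  | succ m ih => rw [Finset.sum_Icc_succ_top (by omega), ih, pow_succ]; ring

lemma nonsquare_sum (H : OCZ G z) {u : G} {m : ℕ} (hm : 1 ≤ m) (hu : orderOf u = 2 ^ m)
    (hns : ∀ w : G, orderOf w = 4 → w ^ 2 ≠ z) : ∑ i ∈ Finset.Icc 1 m, F z (2 ^ i) ≤ 1 / 4 := by
  rcases Nat.eq_or_lt_of_le hm with rfl | hm2
  · simpa using H.F_two
  · have hz : z ∉ Subgroup.zpowers u := by
      intro h
      have h1 := H.z_pow hm hu h
      refine hns (u ^ 2 ^ (m - 2)) (by rw [ord_pow_two hu hm2]; norm_num) ?_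
      rw [← h1, ← pow_mul, ← pow_succ]; congr 2; omega
    have hC : 2 ^ (m + 1) ≤ C u := by
      have := H.C_not_mem hz; rw [hu] at this; rw [pow_succ]; omega
    have h1 : ∑ i ∈ Finset.Icc 1 m, F z (2 ^ i) ≤
        ∑ i ∈ Finset.Icc 1 m, (2 : ℚ) ^ i / 2 ^ (m + (m + 1)) := by
      refine Finset.sum_le_sum fun i hi => ?_
      obtain ⟨hi1, hi2⟩ := Finset.mem_Icc.1 hi
      refine H.F_chain hu hi1 hi2 (fun h => hz ?_) hC
      rw [← h]; exact Subgroup.npow_mem_zpowers _ _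
    rw [← Finset.sum_div, sum_two] at h1
    refine h1.trans ?_
    have : (2 : ℚ) ^ (m + (m + 1)) = 2 ^ m * 2 ^ m * 2 := by rw [pow_add, pow_succ]; ring
    rw [this, div_le_div_iff₀ (by positivity) (by norm_num)]
    nlinarith [sq_nonneg ((2 : ℚ) ^ m - 2)]

lemma square_sum (H : OCZ G z) {u : G} {m : ℕ} (hm : 2 ≤ m) (hu : orderOf u = 2 ^ m) :
    ∑ i ∈ Finset.Icc 1 m, F z (2 ^ i) ≤ 1 / 4 + (2 * 2 ^ m - 4) / (2 ^ m * 2 ^ m) := by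
  have hC : 2 ^ m ≤ C u := hu ▸ Nat.le_of_dvd (C_pos u) (ord_dvd_C (Commute.refl u))
  have h1 : ∀ i ∈ Finset.Icc 1 m, F z (2 ^ i) ≤
      (2 : ℚ) ^ i / 2 ^ (m + m) + (if i = 1 then 1 / 4 - 2 / 2 ^ (m + m) else 0) := by
    intro i hi
    obtain ⟨hi1, hi2⟩ := Finset.mem_Icc.1 hi
    split_ifs with h
    · subst h; have := H.F_two; simp; linarith
    · rw [add_zero]
      refine H.F_chain hu hi1 hi2 (fun h2 => ?_) hC
      have h3 := ord_pow_two hu hi2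
      rw [h2, H.ordz] at h3
      have : 2 ^ 2 ≤ 2 ^ i := Nat.pow_le_pow_right (by norm_num) (by omega)
      omega
  refine (Finset.sum_le_sum h1).trans (le_of_eq ?_)
  rw [Finset.sum_add_distrib, ← Finset.sum_div, sum_two, Finset.sum_ite_eq',
    if_pos (Finset.mem_Icc.2 ⟨le_rfl, by omega⟩), pow_add]
  ring

lemma big2 (H : OCZ G z) (hs : ∀ w : G, orderOf w = 4 → w ^ 2 = z) {x : G} {n k j : ℕ} (hn : 1 < n)
    (ho : Odd n) (hx : orderOf x = n) (hk : k.Coprime n) (hj : 1 ≤ j)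
    (hkj : k ^ 2 ^ j ≡ n - 1 [MOD n]) : ∃ (u : G) (s : ℕ), orderOf u = 2 ^ s ∧ j + 2 ≤ s := by
  have h1 := ne_one_of_ord hn hx
  obtain ⟨g, hg⟩ := H.rational h1 (H.odd_ne h1 (hx ▸ ho)) (k := k) (hx ▸ hk)
  obtain ⟨s, r, hr, hs1, hs2, -⟩ := two_part g
  refine ⟨g ^ r, s, hs2, ?_⟩
  have hnc : ¬ Commute ((g ^ r) ^ 2 ^ j) x := by
    rw [← pow_mul, comm_iter_iff hg, hx, mul_comm, pow_mul]
    exact neg_pow_ne ho hn hkj hr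
  by_contra hc
  apply hnc
  rcases Nat.lt_or_ge j s with h | h
  · obtain rfl : s = j + 1 := by omega
    have h4 : orderOf ((g ^ r) ^ 2 ^ (j - 1)) = 4 := by
      have := ord_pow_two hs2 (j := 2) (by omega)
      rw [show j + 1 - 2 = j - 1 by omega] at this
      rw [this]; norm_num
    have h5 := hs _ h4
    rw [← pow_mul, ← pow_succ, show j - 1 + 1 = j by omega] at h5
    rw [h5]; exact H.comm x
  · have : (g ^ r) ^ 2 ^ j = 1 := by
      rw [← orderOf_dvd_iff_pow_eq_one, hs2]; exact pow_dvd_pow _ h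
    rw [this]; exact Commute.one_left x

lemma f379 (H : OCZ G z) :
    (f z 3 + f z 7 + f z 9 ≤ 1 / 108 + 1 / 12 + 1 / 7 + 1 / 9 ∧ 216 ≤ Nat.card G) ∨
    f z 3 + f z 7 + f z 9 ≤ 1 / 3 := by
  have h3 := H.f_le (n := 3) (by norm_num) (by decide)
  have h7 := H.f_le (n := 7) (by norm_num) (by decide)
  have h9 := H.f_le (n := 9) (by norm_num) (by decide)
  have g7 : ¬ Good G 3 → f z 7 = 0 := fun h => f_zero fun x hx => h (by
    rcases H.M4 (x := x) (ne_one_of_ord (by norm_num) hx) (by rw [hx]; decide) with h | h | h | h | h | ⟨c, hc, h⟩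
    · omega
    · omega
    · exact h.2
    · exact h.2
    · omega
    · have : 16 ≤ 16 ^ c := Nat.le_self_pow (by omega) 16
      omega)
  have g9 : ∀ x : G, orderOf x = 9 → Good G 3 := fun x hx => by
    rcases H.M4 (x := x) (ne_one_of_ord (by norm_num) hx) (by rw [hx]; decide) with h | h | h | h | h | ⟨c, hc, h⟩
    · omega
    · omega
    · exact h.2
    · exact h.2
    · omega
    · have : 16 ≤ 16 ^ c := Nat.le_self_pow (by omega) 16
      omega
  push_cast at h3 h7 h9
  by_cases h : ∃ y : G, orderOf y = 9
  · obtain ⟨y, hy⟩ := h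
    obtain ⟨a, b⟩ := H.f_nine (g9 y hy) hy
    left; exact ⟨by linarith, b⟩
  · push Not at h
    have e9 : f z 9 = 0 := f_zero h
    right
    by_cases hg : Good G 3
    · have := H.f_good hg
      norm_num at this h7
      linarith
    · rw [g7 hg, e9]; linarith

lemma f379_zero (H : OCZ G z) (h : ∀ x : G, orderOf x ≠ 3) : f z 3 + f z 7 + f z 9 = 0 := by
  have hg : ¬ Good G 3 := fun ⟨x, i, hx, _⟩ => h x hx
  rw [f_zero h, f_zero (n := 7), f_zero (n := 9)]
  · norm_num
  · intro x hx; exact h (x ^ 3) (ord_sq (by norm_num) (by rw [hx]))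
  · intro x hx
    rcases H.M4 (x := x) (ne_one_of_ord (by norm_num) hx) (by rw [hx]; decide) with h | h | h | h | h | ⟨c, hc, h⟩
    · omega
    · omega
    · exact hg h.2
    · exact hg h.2
    · omega
    · have : 16 ≤ 16 ^ c := Nat.le_self_pow (by omega) 16
      omega

lemma good5 (H : OCZ G z) {x : G} (hx : orderOf x = 11) : Good G 5 := by
  rcases H.M4 (x := x) (ne_one_of_ord (by norm_num) hx) (by rw [hx]; decide) with h | h | h | h | h | ⟨c, hc, h⟩
  · omega
  · omega
  · omega
  · omega
  · exact h.2
  · have : 16 ≤ 16 ^ c := Nat.le_self_pow (by omega) 16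
    omega

lemma f511 (H : OCZ G z) : f z 5 + f z 11 ≤ 1 / 5 := by
  have h5 := H.f_le (n := 5) (by norm_num) (by decide)
  have h11 := H.f_le (n := 11) (by norm_num) (by decide)
  push_cast at h5 h11
  by_cases hg : Good G 5
  · have := H.f_good hg
    norm_num at this h11
    linarith
  · rw [f_zero (n := 11) (fun x hx => hg (H.good5 hx))]; linarith

lemma f511_zero (H : OCZ G z) (h : ∀ x : G, orderOf x ≠ 5) : f z 5 + f z 11 = 0 := by
  rw [f_zero h, f_zero (n := 11) (fun x hx => by
    obtain ⟨y, i, hy, -⟩ := H.good5 hx; exact h y hy)]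
  norm_num

lemma eight_card (H : OCZ G z) (hs : ∀ w : G, orderOf w = 4 → w ^ 2 = z)
    (hm : ∀ (u : G) (k : ℕ), orderOf u = 2 ^ k → k ≤ 2) {w : G} (hw : orderOf w = 4) :
    8 ∣ Nat.card G := by
  obtain ⟨h1, h2⟩ := H.ne_of_ord (x := w) (by omega) (by omega)
  obtain ⟨g, hg⟩ := H.rational h1 h2 (k := 3) (by rw [hw]; norm_num)
  obtain ⟨s, r, hr, hs1, hs2, -⟩ := two_part g
  have hg3 := conj_iter hg r
  have key : 2 * Nat.card (Subgroup.zpowers w) ∣ Nat.card (⊤ : Subgroup G) := by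
    refine div_lemma (g := g ^ r) le_top Nat.prime_two (Subgroup.mem_top _) ?_ ?_ ?_
    · rintro _ ⟨k, rfl⟩
      simp only
      rw [← conj_zpow, hg3]
      exact zpow_mem (Subgroup.npow_mem_zpowers _ _) _
    · intro hmem
      have := (comm_of_mem hmem (Commute.refl w)).symm
      rw [comm_iter_iff hg, hw] at this
      obtain ⟨q, rfl⟩ := hr
      rw [pow_succ, pow_mul] at this
      have h9 : (3 ^ 2) ^ q ≡ 1 [MOD 4] := by
        have : 3 ^ 2 ≡ 1 [MOD 4] := by decide
        simpa using this.pow q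
      have := (h9.symm.mul_right 3).trans this
      revert this; decide
    · have := hm _ _ hs2
      rcases (by omega : s ≤ 1 ∨ s = 2) with h | rfl
      · have : (g ^ r) ^ 2 = 1 := by
          rw [← orderOf_dvd_iff_pow_eq_one, hs2]; exact pow_dvd_pow 2 h
        rw [this]; exact one_mem _
      · rw [hs _ (by rw [hs2]; norm_num), ← hs w hw]; exact Subgroup.npow_mem_zpowers _ _
  rw [Nat.card_zpowers, hw, Subgroup.card_top] at key
  exact key

lemma two_div_le {c N : ℕ} (hc : 0 < c) (h : c ≤ N) : 2 / (N : ℚ) ≤ 2 / c := by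
  apply div_le_div_of_nonneg_left (by norm_num) (by exact_mod_cast hc) (by exact_mod_cast h)

theorem final (H : OCZ G z) (hex : ∃ x : G, x ≠ 1 ∧ x ≠ z) : False := by
  obtain ⟨x0, hx0, hx0z⟩ := hex
  have h6 := two_div_le (by norm_num) (H.card_ge hx0 hx0z)
  obtain ⟨m, ⟨u, hu⟩, hm1, hmax⟩ := exists_max (fun m => ∃ u : G, orderOf u = 2 ^ m) 1 (Nat.card G)
    ⟨z, by rw [H.ordz]; norm_num⟩ (fun m ⟨u, hu⟩ => ord_two_pow_le hu)
  have hm : ∀ (u : G) (k : ℕ), orderOf u = 2 ^ k → k ≤ m := fun u k h => hmax k ⟨u, h⟩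
  have htot := H.total hm
  have htail := H.tail_le (Nat.card G)
  have h511 := H.f511
  have h379 := H.f379
  push_cast at h6
  by_cases hs : ∃ w : G, orderOf w = 4 ∧ w ^ 2 = z
  · -- square case
    obtain ⟨w, hw, hwz⟩ := hs
    have hs : ∀ w : G, orderOf w = 4 → w ^ 2 = z := by
      intro v hv
      obtain ⟨a1, a2⟩ := H.ne_of_ord (x := w) (by omega) (by omega)
      obtain ⟨b1, b2⟩ := H.ne_of_ord (x := v) (by omega) (by omega)
      obtain ⟨g, hg⟩ := H.conj w v a1 a2 b1 b2 (by omega)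
      rw [← hg, conj_pow, hwz, ← comm_iff_conj]
      exact (H.comm g).symm
    have hm2 : 2 ≤ m := hm w 2 (by rw [hw]; norm_num)
    have hS := H.square_sum hm2 hu
    have r5 : ∀ x : G, orderOf x = 5 → 3 ≤ m := by
      intro x hx
      obtain ⟨v, s, hv, hvs⟩ := H.big2 hs (n := 5) (k := 2) (j := 1) (by norm_num) (by decide) hx
        (by norm_num) le_rfl (by decide)
      have := hm v s hv; omega
    have rt : ∀ (x : G) (c : ℕ), 1 ≤ c → orderOf x = 16 ^ c + 1 → 4 ≤ m := by
      intro x c hc hx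
      have hp : 0 < 16 ^ c := by positivity
      obtain ⟨v, s, hv, hvs⟩ := H.big2 hs (n := 16 ^ c + 1) (k := 2 ^ c) (j := 2) (by omega)
        (Even.add_one (Nat.even_pow.2 ⟨by decide, by omega⟩)) hx
        (by
          apply Nat.Coprime.pow_left
          rw [Nat.coprime_two_left]
          exact (Even.add_one (Nat.even_pow.2 ⟨by decide, by omega⟩))) (by norm_num)
        (by
          rw [← pow_mul, mul_comm, pow_mul]; norm_num; rfl)
      have := hm v s hv; omega
    rcases (by omega : m = 2 ∨ m = 3 ∨ 4 ≤ m) with rfl | rfl | hm4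
    · rw [tail_zero (fun x c hc h => by have := rt x c hc h; omega),
        H.f511_zero (fun x h => by have := r5 x h; omega)] at htot
      norm_num at hS
      rcases h379 with ⟨ha, hb⟩ | ha
      · have := two_div_le (by norm_num) hb
        push_cast at this
        linarith
      · by_cases h3 : ∃ x : G, orderOf x = 3
        · obtain ⟨x, hx⟩ := h3
          have h8 := H.eight_card hs hm hw
          have h24 : 8 * 3 ∣ Nat.card G := Nat.Coprime.mul_dvd_of_dvd_of_dvd (by norm_num) h8
            (hx ▸ orderOf_dvd_natCard x)
          have := two_div_le (by norm_num) (Nat.le_of_dvd Nat.card_pos h24)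
          push_cast at this
          linarith
        · push Not at h3
          rw [H.f379_zero h3] at htot
          linarith
    · rw [tail_zero (fun x c hc h => by have := rt x c hc h; omega)] at htot
      norm_num at hS
      have h8 : 8 ∣ Nat.card G := by
        have := orderOf_dvd_natCard u; rw [hu] at this; norm_num at this; exact this
      rcases h379 with ⟨ha, hb⟩ | ha
      · have := two_div_le (by norm_num) hb
        push_cast at this
        linarith
      · by_cases h3 : ∃ x : G, orderOf x = 3
        · obtain ⟨x, hx⟩ := h3
          have h24 : 8 * 3 ∣ Nat.card G := Nat.Coprime.mul_dvd_of_dvd_of_dvd (by norm_num) h8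
            (hx ▸ orderOf_dvd_natCard x)
          by_cases h5 : ∃ x : G, orderOf x = 5
          · obtain ⟨y, hy⟩ := h5
            have h120 : 8 * 3 * 5 ∣ Nat.card G := Nat.Coprime.mul_dvd_of_dvd_of_dvd (by norm_num) h24
              (hy ▸ orderOf_dvd_natCard y)
            have := two_div_le (by norm_num) (Nat.le_of_dvd Nat.card_pos h120)
            push_cast at this
            linarith
          · push Not at h5
            rw [H.f511_zero h5] at htot
            have := two_div_le (by norm_num) (Nat.le_of_dvd Nat.card_pos h24)
            push_cast at this
            linarith
        · push Not at h3
          rw [H.f379_zero h3] at htot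
          linarith
    · have ht : (16 : ℚ) ≤ 2 ^ m := by
        have : (2 : ℚ) ^ 4 ≤ 2 ^ m := pow_le_pow_right₀ (by norm_num) hm4
        norm_num at this; exact this
      have hS2 : (2 * (2 : ℚ) ^ m - 4) / (2 ^ m * 2 ^ m) ≤ 7 / 64 := by
        rw [div_le_div_iff₀ (by positivity) (by norm_num)]
        nlinarith
      have h128 : 128 ≤ Nat.card G := by
        have ho := ord_pow_two hu hm2
        norm_num at ho
        obtain ⟨a1, a2⟩ := H.ne_of_ord (x := u ^ 2 ^ (m - 2)) (by omega) (by omega)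
        have h1 := H.two_C_le a1 a2
        have h2 := H.chain hu (m - 2) (by omega)
        have hC : 2 ^ m ≤ C u := hu ▸ Nat.le_of_dvd (C_pos u) (ord_dvd_C (Commute.refl u))
        have h3 : 2 ^ 2 ≤ 2 ^ (m - 2) := Nat.pow_le_pow_right (by norm_num) (by omega)
        have h4 : 2 ^ 4 ≤ 2 ^ m := Nat.pow_le_pow_right (by norm_num) hm4
        have h5 : 2 ^ 2 * 2 ^ 4 ≤ 2 ^ (m - 2) * C u := Nat.mul_le_mul h3 (h4.trans hC)
        omega
      rcases h379 with ⟨ha, hb⟩ | ha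
      · have := two_div_le (by norm_num) hb
        push_cast at this
        linarith
      · have := two_div_le (by norm_num) h128
        push_cast at this
        linarith
  · -- nonsquare case
    push Not at hs
    have hS := H.nonsquare_sum hm1 hu hs
    have hng : ∀ n, ¬ Good G n := by
      rintro n ⟨x, i, hx, h1, ho, hi, hxi⟩
      obtain ⟨a1, a2⟩ := H.ne_of_ord (x := i) (by omega) (by omega)
      exact hs i hi (H.U1' h1 (hx ▸ ho) hxi (k := 2) (by rw [hi]; norm_num) a1 a2).2
    have h3 : f z 3 + f z 7 + f z 9 ≤ 1 / 3 := by
      have h3 := H.f_le (n := 3) (by norm_num) (by decide)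
      rw [f_zero (n := 7), f_zero (n := 9)]
      · push_cast at h3; linarith
      all_goals
        intro x hx
        rcases H.M4 (x := x) (ne_one_of_ord (by norm_num) hx) (by rw [hx]; decide) with h | h | h | h | h | ⟨c, hc, h⟩
        · omega
        · omega
        · exact hng _ h.2
        · exact hng _ h.2
        · exact hng _ h.2
        · have : 16 ≤ 16 ^ c := Nat.le_self_pow (by omega) 16
          omega
    by_cases hbig : ∃ x : G, Odd (orderOf x) ∧ 5 ≤ orderOf x
    · obtain ⟨x, ho, hx⟩ := hbig
      obtain ⟨a1, a2⟩ := H.ne_of_ord (x := x) (by omega) (by omega)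
      have h1 := H.two_C_le a1 a2
      have h2 := Nat.le_of_dvd (C_pos x) (H.C_odd (by omega) ho rfl)
      have := two_div_le (c := 20) (by norm_num) (by omega : 20 ≤ Nat.card G)
      push_cast at this
      linarith
    · push Not at hbig
      rw [tail_zero, H.f511_zero] at htot
      · linarith
      · intro x hx
        have := hbig x (by rw [hx]; decide); omega
      · intro x c hc hx
        have h16 : 16 ≤ 16 ^ c := Nat.le_self_pow (by omega) 16
        have := hbig x (by rw [hx]; exact (Even.add_one (Nat.even_pow.2 ⟨by decide, by omega⟩)))
        omega

end OCZ

set_option linter.unusedSectionVars false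
set_option linter.unusedVariables false

namespace OCZ

variable {G : Type} [Group G] [Finite G]

/-- The OC condition. -/
def IsOC (G : Type) [Group G] : Prop := ∀ x y : G, x ∉ Subgroup.center G → y ∉ Subgroup.center G →
      orderOf x = orderOf y → IsConj x y

lemma oc_eq (H : IsOC G) {a b c : G} (ha : a ∉ Subgroup.center G) (hb : b ∈ Subgroup.center G)
    (hc : c ∈ Subgroup.center G) (ho : orderOf c = orderOf b)
    (hco : (orderOf a).Coprime (orderOf b)) : b = c := by
  have cb : Commute a b := Subgroup.mem_center_iff.1 hb a
  have cc : Commute a c := Subgroup.mem_center_iff.1 hc a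
  obtain ⟨i, j, hij⟩ := pow_crt cb hco
  have e1 := (hij a b cb rfl rfl).2
  have e2 := (hij a c cc rfl ho).2
  have o1 := cb.orderOf_mul_eq_mul_orderOf_of_coprime hco
  have o2 := cc.orderOf_mul_eq_mul_orderOf_of_coprime (ho ▸ hco)
  have n1 : a * b ∉ Subgroup.center G := fun h => ha ((Subgroup.mul_mem_cancel_right _ hb).1 h)
  have n2 : a * c ∉ Subgroup.center G := fun h => ha ((Subgroup.mul_mem_cancel_right _ hc).1 h)
  obtain ⟨g, hg⟩ := isConj_iff.1 (H _ _ n1 n2 (by rw [o1, o2, ho]))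
  have h := conj_pow' hg j
  rw [e1, e2] at h
  have h2 : Commute g b := Subgroup.mem_center_iff.1 hb g
  rw [← h]; exact (comm_iff_conj.1 h2).symm

lemma two_odd_coprime {s r : ℕ} (hr : Odd r) : (2 ^ s).Coprime r :=
  Nat.Coprime.pow_left _ (Nat.coprime_two_left.2 hr)

/-- if both parts are central, so is the element -/
lemma central_of_parts {g : G} {K : Subgroup G} {s r : ℕ} (hr : Odd r)
    (h1 : g ^ r ∈ K) (h2 : g ^ 2 ^ s ∈ K) : g ∈ K := by
  have hb := Int.gcd_eq_gcd_ab (2 ^ s : ℕ) (r : ℕ)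
  have hc : Int.gcd (2 ^ s : ℕ) (r : ℕ) = 1 := by
    rw [Int.gcd_natCast_natCast]; exact two_odd_coprime hr
  rw [hc] at hb
  have : g = (g ^ 2 ^ s) ^ (Int.gcdA (2 ^ s : ℕ) r) * (g ^ r) ^ (Int.gcdB (2 ^ s : ℕ) r) := by
    rw [← zpow_natCast, ← zpow_natCast, ← zpow_mul, ← zpow_mul, ← zpow_add, ← hb]; simp
  rw [this]
  exact K.mul_mem (K.zpow_mem h2 _) (K.zpow_mem h1 _)

/-- number of noncentral elements of given order -/
noncomputable def NC (G : Type) [Group G] (n : ℕ) : ℕ :=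
  Nat.card {g : G // g ∉ Subgroup.center G ∧ orderOf g = n}

lemma NC_count (H : IsOC G) {x : G} (h1 : x ∉ Subgroup.center G) :
    NC G (orderOf x) * C x ≤ Nat.card G := by
  have hc : ∀ h : {g : G // g ∉ Subgroup.center G ∧ orderOf g = orderOf x},
      ∃ g, g * x * g⁻¹ = h.1 :=
    fun h => isConj_iff.1 (H x h.1 h1 h.2.1 h.2.2.symm)
  choose φ hφ using hc
  rw [NC, C, ← Nat.card_prod]
  refine Nat.card_le_card_of_injective (fun p => φ p.1 * p.2.1) ?_
  rintro ⟨a, c⟩ ⟨b, d⟩ h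
  simp only at h
  have key : ∀ a (c : Subgroup.centralizer {x}), (φ a * c.1) * x * (φ a * c.1)⁻¹ = a.1 := by
    intro a c
    have : c.1 * x * c.1⁻¹ = x := comm_iff_conj.1 (mem_cent.1 c.2)
    calc (φ a * c.1) * x * (φ a * c.1)⁻¹ = φ a * (c.1 * x * c.1⁻¹) * (φ a)⁻¹ := by group
      _ = _ := by rw [this, hφ]
  have hab : a = b := by
    apply Subtype.ext
    rw [← key a c, ← key b d, h]
  subst hab
  rw [Prod.mk.injEq]
  exact ⟨rfl, Subtype.ext (mul_left_cancel h)⟩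

lemma NC_le (H : IsOC G) {n c : ℕ} (hc : 0 < c)
    (h : ∀ x : G, x ∉ Subgroup.center G → orderOf x = n → c ≤ C x) :
    (NC G n : ℚ) / Nat.card G ≤ 1 / c := by
  have hG : 0 < Nat.card G := Nat.card_pos
  by_cases hex : ∃ x : G, x ∉ Subgroup.center G ∧ orderOf x = n
  · obtain ⟨x, h1, rfl⟩ := hex
    have h4 : NC G (orderOf x) * c ≤ Nat.card G :=
      (Nat.mul_le_mul_left _ (h x h1 rfl)).trans (NC_count H h1)
    rw [div_le_div_iff₀ (by exact_mod_cast hG) (by exact_mod_cast hc), one_mul]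
    exact_mod_cast h4
  · have : NC G n = 0 := by
      unfold NC
      have : IsEmpty {g : G // g ∉ Subgroup.center G ∧ orderOf g = n} := ⟨fun g => hex ⟨g.1, g.2⟩⟩
      exact Nat.card_of_isEmpty
    rw [this]; simp

lemma NC_cover (m : ℕ) (h : ∀ g : G, g ∉ Subgroup.center G → ∃ i < m, orderOf g = 2 ^ i) :
    Nat.card G ≤ Nat.card (Subgroup.center G) + ∑ i ∈ Finset.range m, NC G (2 ^ i) := by
  classical
  have := Fintype.ofFinite G
  have hsub : (Finset.univ : Finset G) ⊆
      Finset.univ.filter (fun g : G => g ∈ Subgroup.center G) ∪ (Finset.range m).biUnion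
      (fun i => Finset.univ.filter (fun g : G => g ∉ Subgroup.center G ∧ orderOf g = 2 ^ i)) := by
    intro g _
    by_cases h1 : g ∈ Subgroup.center G
    · exact Finset.mem_union_left _ (Finset.mem_filter.2 ⟨Finset.mem_univ _, h1⟩)
    obtain ⟨i, hi, hg⟩ := h g h1
    refine Finset.mem_union_right _ (Finset.mem_biUnion.2 ⟨i, Finset.mem_range.2 hi, ?_⟩)
    exact Finset.mem_filter.2 ⟨Finset.mem_univ _, h1, hg⟩
  have h1 := (Finset.card_le_card hsub).trans (Finset.card_union_le _ _)
  have h3 : ((Finset.range m).biUnion (fun i => Finset.univ.filter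
      (fun g : G => g ∉ Subgroup.center G ∧ orderOf g = 2 ^ i))).card
      ≤ ∑ i ∈ Finset.range m, NC G (2 ^ i) := by
    refine Finset.card_biUnion_le.trans (Finset.sum_le_sum fun i _ => ?_)
    unfold NC
    rw [Nat.card_eq_fintype_card, Fintype.card_subtype]
  have h4 : (Finset.univ.filter (fun g : G => g ∈ Subgroup.center G)).card
      = Nat.card (Subgroup.center G) := by
    rw [Nat.card_eq_fintype_card]
    exact (Fintype.card_subtype _).symm
  rw [Nat.card_eq_fintype_card, ← Finset.card_univ]
  omega

lemma geom_bound (a : ℕ → ℚ) (h0 : a 0 ≤ 0) (h1 : a 1 ≤ 1 / 4) (h : ∀ i, a i ≤ 1 / 2 ^ i) (m : ℕ) :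
    ∑ i ∈ Finset.range (m + 2), a i ≤ 3 / 4 - 1 / 2 ^ (m + 1) := by
  induction m with
  | zero => rw [Finset.sum_range_succ, Finset.sum_range_succ]; norm_num; linarith
  | succ m ih =>
    rw [Finset.sum_range_succ]
    have h2 := h (m + 2)
    have e : (1 : ℚ) / 2 ^ (m + 1) = 1 / 2 ^ (m + 2) + 1 / 2 ^ (m + 2) := by
      rw [pow_succ _ (m + 1)]; field_simp; norm_num
    rw [show m + 1 + 1 = m + 2 from rfl]
    linarith

lemma case_two (H : IsOC G) (hb : Subgroup.center G ≠ ⊥) (ht : Subgroup.center G ≠ ⊤)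
    (h2 : ∀ g : G, ∃ i, orderOf g = 2 ^ i) : False := by
  have hG : (0 : ℚ) < Nat.card G := by exact_mod_cast (Nat.card_pos : 0 < Nat.card G)
  have hZ2 : 2 ≤ Nat.card (Subgroup.center G) := by
    have := (Subgroup.one_lt_card_iff_ne_bot (Subgroup.center G)).2 hb
    omega
  have hC : ∀ x : G, x ∉ Subgroup.center G → 2 * Nat.card (Subgroup.center G) ≤ C x := by
    intro x hx
    refine two_card' (g := x) ?_ (mem_cent.2 (Commute.refl x)) hx
    intro a ha
    exact mem_cent.2 (Subgroup.mem_center_iff.1 ha x).symm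
  have hZ : 4 * Nat.card (Subgroup.center G) ≤ Nat.card G := by
    obtain ⟨x, hx⟩ : ∃ x, x ∉ Subgroup.center G := by
      by_contra hc; push Not at hc; exact ht (Subgroup.eq_top_iff' _ |>.2 hc)
    have h1 := hC x hx
    obtain ⟨g, hg⟩ : ∃ g, ¬ Commute g x := by
      by_contra hc; push Not at hc; exact hx (Subgroup.mem_center_iff.2 hc)
    have := two_card' (A := Subgroup.centralizer {x}) (B := ⊤) le_top (Subgroup.mem_top g)
      (fun h => hg (mem_cent.1 h))
    rw [Subgroup.card_top] at this
    unfold C at h1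
    omega
  have hcov := NC_cover (G := G) (Nat.card G + 2) (fun g _ => by
    obtain ⟨i, hi⟩ := h2 g
    refine ⟨i, ?_, hi⟩
    have h5 : 2 ^ i ≤ Nat.card G := Nat.le_of_dvd Nat.card_pos (hi ▸ orderOf_dvd_natCard g)
    have h6 : i < 2 ^ i := Nat.lt_pow_self (by norm_num)
    omega)
  have hbd := geom_bound (fun i => (NC G (2 ^ i) : ℚ) / Nat.card G) (by
      have : NC G (2 ^ 0) = 0 := by
        unfold NC
        have : IsEmpty {g : G // g ∉ Subgroup.center G ∧ orderOf g = 2 ^ 0} := ⟨by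
          rintro ⟨g, hg1, hg2⟩
          rw [pow_zero, orderOf_eq_one_iff] at hg2
          exact hg1 (hg2 ▸ Subgroup.one_mem _)⟩
        exact Nat.card_of_isEmpty
      simp only [this]; simp) (by
      have := NC_le H (n := 2 ^ 1) (c := 4) (by norm_num) (fun x hx _ => by
        have := hC x hx; omega)
      exact_mod_cast this) (fun i => by
      have := NC_le H (n := 2 ^ i) (c := 2 ^ i) (by positivity) (fun x hx ho =>
        Nat.le_of_dvd (C_pos x) (ho ▸ ord_dvd_C (Commute.refl x)))
      exact_mod_cast this) (Nat.card G)
  rw [← Finset.sum_div] at hbd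
  have hp : (0 : ℚ) < 1 / 2 ^ (Nat.card G + 1) := by positivity
  have h7 : (∑ i ∈ Finset.range (Nat.card G + 2), (NC G (2 ^ i) : ℚ)) / Nat.card G < 3 / 4 := by
    linarith
  rw [div_lt_iff₀ hG] at h7
  have h8 : (Nat.card G : ℚ) ≤ Nat.card (Subgroup.center G) +
      ∑ i ∈ Finset.range (Nat.card G + 2), (NC G (2 ^ i) : ℚ) := by exact_mod_cast hcov
  have h9 : (4 : ℚ) * Nat.card (Subgroup.center G) ≤ Nat.card G := by exact_mod_cast hZ
  linarith

/-- central odd elements die as soon as there is a noncentral 2-element -/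
lemma odd_central (H : IsOC G) {a : G} (ha : a ∉ Subgroup.center G) {s : ℕ}
    (hs : orderOf a = 2 ^ s) {y : G} (hy : y ∈ Subgroup.center G) (ho : Odd (orderOf y)) : y = 1 := by
  have h := oc_eq H ha hy (Subgroup.inv_mem _ hy) (orderOf_inv y) (hs ▸ two_odd_coprime ho)
  by_contra h1
  have h3 := odd_ge h1 ho
  have h4 : y ^ 2 = 1 := by rw [sq]; nth_rewrite 2 [h]; simp
  have := Nat.le_of_dvd (by norm_num) (orderOf_dvd_of_pow_eq_one h4)
  omega

theorem main (H : IsOC G) (hb : Subgroup.center G ≠ ⊥) (ht : Subgroup.center G ≠ ⊤) : False := by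
  by_cases hx : ∃ x : G, x ∉ Subgroup.center G ∧ Odd (orderOf x)
  · obtain ⟨x, hx, ho⟩ := hx
    have hx1 : x ≠ 1 := by rintro rfl; exact hx (Subgroup.one_mem _)
    have hxi : x⁻¹ ∉ Subgroup.center G := fun h => hx (inv_mem_iff.1 h)
    obtain ⟨g, hg⟩ := isConj_iff.1 (H x x⁻¹ hx hxi (orderOf_inv x).symm)
    obtain ⟨s, r, hr, -, hs, -⟩ := two_part g
    have hgr : ∀ k : ℕ, g ^ (2 * k + 1) * x * (g ^ (2 * k + 1))⁻¹ = x⁻¹ := by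
      intro k
      induction k with
      | zero => simpa using hg
      | succ k ih =>
        have : g ^ (2 * (k + 1) + 1) * x * (g ^ (2 * (k + 1) + 1))⁻¹ =
            g * (g * (g ^ (2 * k + 1) * x * (g ^ (2 * k + 1))⁻¹) * g⁻¹) * g⁻¹ := by
          rw [show 2 * (k + 1) + 1 = 2 + (2 * k + 1) by ring, pow_add g 2, sq]; group
        rw [this, ih]
        have e : g * x⁻¹ * g⁻¹ = x := by rw [← conj_inv, hg, inv_inv]
        rw [e, hg]
    have hgn : g ^ r ∉ Subgroup.center G := by
      intro hc
      obtain ⟨k, rfl⟩ := hr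
      have h1 := hgr k
      rw [← (Subgroup.mem_center_iff.1 hc x : x * _ = _), mul_inv_cancel_right] at h1
      have h4 : x ^ 2 = 1 := by rw [sq]; nth_rewrite 2 [h1]; simp
      have h5 := Nat.le_of_dvd (by norm_num) (orderOf_dvd_of_pow_eq_one h4)
      have := odd_ge hx1 ho
      omega
    have hZ : ∀ y ∈ Subgroup.center G, y ≠ 1 → orderOf y = 2 := by
      intro y hy hy1
      obtain ⟨t, q, hq, hyo, hyt, hyq⟩ := two_part y
      have h1 : y ^ 2 ^ t = 1 :=
        odd_central H hgn hs (Subgroup.pow_mem _ hy _) (hyq ▸ hq)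
      rw [h1, orderOf_one] at hyq
      rw [← hyq, mul_one] at hyo
      have h := oc_eq H hx hy (Subgroup.inv_mem _ hy) (orderOf_inv y)
        (hyo ▸ (two_odd_coprime ho).symm)
      have h4 : y ^ 2 = 1 := by rw [sq]; nth_rewrite 2 [h]; simp
      exact orderOf_eq_prime h4 hy1
    obtain ⟨z, hz, hz1⟩ := Subgroup.ne_bot_iff_exists_ne_one.1 hb |>.elim
      (fun a ha => (⟨a.1, a.2, fun h => ha (Subtype.ext h)⟩ :
        ∃ z, z ∈ Subgroup.center G ∧ z ≠ 1))
    have hZ' : ∀ y ∈ Subgroup.center G, y = 1 ∨ y = z := by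
      intro y hy
      by_cases hy1 : y = 1
      · exact Or.inl hy1
      · refine Or.inr (oc_eq H hx hy hz ((hZ z hz hz1).trans (hZ y hy hy1).symm) ?_)
        rw [hZ y hy hy1]; exact Nat.coprime_two_right.2 ho
    have hnc : ∀ y : G, y ≠ 1 → y ≠ z → y ∉ Subgroup.center G := by
      intro y h1 h2 h
      rcases hZ' y h with h | h <;> contradiction
    have HO : OCZ G z := {
      ordz := hZ z hz hz1
      comm := fun g => (Subgroup.mem_center_iff.1 hz g).symm
      conj := fun a b a1 a2 b1 b2 hab => isConj_iff.1 (H a b (hnc a a1 a2) (hnc b b1 b2) hab)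
      nc := fun y hy => hZ' y (Subgroup.mem_center_iff.2 fun g => (hy g).symm) }
    exact HO.final ⟨x, hx1, by rintro rfl; exact hx hz⟩
  · push Not at hx
    obtain ⟨g, hg⟩ : ∃ x, x ∉ Subgroup.center G := by
      by_contra hc; push Not at hc; exact ht (Subgroup.eq_top_iff' _ |>.2 hc)
    have hodd : ∀ y : G, Odd (orderOf y) → y ∈ Subgroup.center G := by
      intro y hy; by_contra hc; exact hx y hc hy
    obtain ⟨s, r, hr, -, hs, hro⟩ := two_part g
    have ha : g ^ r ∉ Subgroup.center G := fun h =>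
      hg (central_of_parts hr h (hodd _ (hro ▸ hr)))
    refine case_two H hb ht fun y => ?_
    obtain ⟨t, q, hq, hyo, hyt, hyq⟩ := two_part y
    have h1 : y ^ 2 ^ t = 1 := odd_central H ha hs (hodd _ (hyq ▸ hq)) (hyq ▸ hq)
    rw [h1, orderOf_one] at hyq
    exact ⟨t, by rw [hyo, ← hyq, mul_one]⟩

end OCZ


/-- There is no non-trivial OC-group: if `G` is a finite group in
which any two elements of the same order outside the center are conjugate, then the
center is trivial or all of `G`. -/
theorem no_nontrivial_oc_group (G : Type) [Group G] [Finite G]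
    (hOC : ∀ x y : G, x ∉ Subgroup.center G → y ∉ Subgroup.center G →
      orderOf x = orderOf y → IsConj x y) :
    Subgroup.center G = ⊥ ∨ Subgroup.center G = ⊤ := by
  by_contra h
  push Not at h
  exact OCZ.main hOC h.1 h.2
end

section
/- If G is a non-trivial OC-group, then G is not nilpotent. -/
/-- The OC condition. -/
def OCProp (G : Type) [Group G] : Prop :=
  ∀ x y : G, x ∉ Subgroup.center G → y ∉ Subgroup.center G →
      orderOf x = orderOf y → IsConj x y

/-- Weights bounding the relative sizes of the classes. -/
def ocWeight (i : ℕ) : ℚ := if i = 0 then 0 else if i = 1 then 1/4 else 1/2^i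

lemma ocWeight_sum (k : ℕ) :
    ∑ i ∈ Finset.range (k+2), ocWeight i = 3/4 - (1/2)/2^k := by
  induction k with
  | zero => norm_num [Finset.sum_range_succ, ocWeight]
  | succ k ih =>
    rw [Finset.sum_range_succ, ih]
    have : ocWeight (k+2) = 1/2^(k+2) := by simp [ocWeight]
    rw [show k + 1 + 1 = k + 2 from rfl] at *
    rw [this]
    field_simp
    ring

lemma two_mul_card_le {G : Type} [Group G] [Finite G] {H K : Subgroup G} (h : H < K) :
    2 * Nat.card H ≤ Nat.card K := by
  obtain ⟨c, hc⟩ := Subgroup.card_dvd_of_le h.le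
  have hK : 0 < Nat.card K := Nat.card_pos
  have hne : Nat.card H ≠ Nat.card K := fun e =>
    h.ne (Subgroup.eq_of_le_of_card_ge h.le e.ge)
  have : 2 ≤ c := by
    by_contra hlt
    interval_cases c <;> simp_all
  rw [hc, mul_comm]
  exact Nat.mul_le_mul_left _ this

lemma center_lt_centralizer {G : Type} [Group G] {x : G} (hx : x ∉ Subgroup.center G) :
    Subgroup.center G < Subgroup.centralizer {x} ∧
    Subgroup.centralizer {x} < (⊤ : Subgroup G) := by
  constructor
  · refine lt_of_le_of_ne (Subgroup.center_le_centralizer _) fun e => hx ?_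
    rw [e, Subgroup.mem_centralizer_singleton_iff]
  · refine lt_of_le_of_ne le_top fun e => hx ?_
    rw [Subgroup.mem_center_iff]
    intro g
    have : g ∈ Subgroup.centralizer {x} := e ▸ Subgroup.mem_top g
    rw [Subgroup.mem_centralizer_singleton_iff] at this
    first | exact this | exact this.symm

lemma card_class_mul {G : Type} [Group G] [Finite G] (x : G) :
    Nat.card {y : G | IsConj x y} * Nat.card (Subgroup.centralizer {x}) = Nat.card G := by
  have h := Subgroup.card_mul_index (Subgroup.centralizer {x})
  have h2 := Subgroup.nat_card_centralizer_nat_card_stabilizer x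
  have h3 := MulAction.index_stabilizer (ConjAct G) x
  have h4 := Subgroup.card_mul_index (MulAction.stabilizer (ConjAct G) x)
  have h5 : Nat.card (ConjAct G) = Nat.card G := rfl
  have h6 : MulAction.orbit (ConjAct G) x = {y : G | IsConj x y} := by
    ext y
    rw [ConjAct.mem_orbit_conjAct]
    exact isConj_comm
  rw [h3, h6, h5, ← h2] at h4
  rw [← h4, mul_comm]
  rfl

lemma oc_pgroup_comm {G : Type} [Group G] [Finite G] {p : ℕ} [hp : Fact p.Prime]
    (hG : IsPGroup p G) (hOC : OCProp G) : Subgroup.center G = ⊤ := by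
  classical
  by_contra hne
  have : Fintype G := Fintype.ofFinite G
  obtain ⟨x₀, hx₀⟩ : ∃ x, x ∉ Subgroup.center G := by
    by_contra! h
    exact hne (eq_top_iff.2 fun x _ => h x)
  have hnt : Nontrivial G := ⟨x₀, 1, fun e => hx₀ (e ▸ one_mem _)⟩
  have hZnt := hG.center_nontrivial
  have hZ2 : 2 ≤ Nat.card (Subgroup.center G) := Finite.one_lt_card
  have hC4 : ∀ x : G, x ∉ Subgroup.center G → 4 ≤ Nat.card (Subgroup.centralizer {x}) := by
    intro x hx
    have := two_mul_card_le (center_lt_centralizer hx).1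
    omega
  have hZG : 4 * Nat.card (Subgroup.center G) ≤ Nat.card G := by
    have h1 := two_mul_card_le (center_lt_centralizer hx₀).1
    have h2 := two_mul_card_le (center_lt_centralizer hx₀).2
    rw [Subgroup.card_top] at h2
    omega
  obtain ⟨e, he⟩ := IsPGroup.iff_card.1 hG
  set N : Finset G := Finset.univ.filter (fun x => x ∉ Subgroup.center G) with hN
  have hNcard : Nat.card (Subgroup.center G) + N.card = Nat.card G := by
    have := Finset.card_filter_add_card_filter_not (s := (Finset.univ : Finset G))
      (fun x => x ∈ Subgroup.center G)
    rw [Nat.card_eq_fintype_card (α := G), ← Finset.card_univ, ← this, hN]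
    congr 1
    rw [Nat.card_eq_fintype_card, Fintype.card_subtype]
  have hcover : N ⊆ (Finset.range (e+2)).biUnion
      (fun i => N.filter (fun x => orderOf x = p^i)) := by
    intro x hx
    have hd : orderOf x ∣ p^e := he ▸ orderOf_dvd_natCard x
    obtain ⟨i, hi, hxi⟩ := (Nat.dvd_prime_pow hp.out).1 hd
    simp only [Finset.mem_biUnion, Finset.mem_range, Finset.mem_filter]
    exact ⟨i, by omega, hx, hxi⟩
  have hle : N.card ≤ ∑ i ∈ Finset.range (e+2), (N.filter (fun x => orderOf x = p^i)).card :=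
    (Finset.card_le_card hcover).trans Finset.card_biUnion_le
  have hbound : ∀ i, ((N.filter (fun x => orderOf x = p^i)).card : ℚ) ≤
      ocWeight i * (Nat.card G : ℚ) := by
    intro i
    have hw : 0 ≤ ocWeight i := by unfold ocWeight; split_ifs <;> positivity
    rcases (N.filter (fun x => orderOf x = p^i)).eq_empty_or_nonempty with h | ⟨x, hx⟩
    · rw [h]; simp only [Finset.card_empty, Nat.cast_zero]; positivity
    · simp only [hN, Finset.mem_filter, Finset.mem_univ, true_and] at hx
      obtain ⟨hxZ, hxo⟩ := hx
      have hsub : (N.filter (fun x => orderOf x = p^i)).card ≤ Nat.card {y : G | IsConj x y} := by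
        rw [Nat.card_eq_fintype_card, ← Set.toFinset_card]
        apply Finset.card_le_card
        intro y hy
        simp only [hN, Finset.mem_filter, Finset.mem_univ, true_and] at hy
        simp only [Set.mem_toFinset, Set.mem_setOf_eq]
        exact hOC x y hxZ hy.1 (by rw [hxo, hy.2])
      have hmul := card_class_mul x
      have h4 := hC4 x hxZ
      have hi0 : i ≠ 0 := by
        rintro rfl
        rw [pow_zero, orderOf_eq_one_iff] at hxo
        exact hxZ (hxo ▸ one_mem _)
      have hpi : 2^i ≤ Nat.card (Subgroup.centralizer {x}) := by
        calc 2^i ≤ p^i := Nat.pow_le_pow_left hp.out.two_le i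
          _ = Nat.card (Subgroup.zpowers x) := by rw [Nat.card_zpowers, hxo]
          _ ≤ _ := by
            apply Nat.le_of_dvd Nat.card_pos
            apply Subgroup.card_dvd_of_le
            rw [Subgroup.zpowers_le, Subgroup.mem_centralizer_singleton_iff]
      have hwc : 1 ≤ ocWeight i * (Nat.card (Subgroup.centralizer {x}) : ℚ) := by
        have h4' : (4:ℚ) ≤ (Nat.card (Subgroup.centralizer {x}) : ℚ) := by exact_mod_cast h4
        have hpi' : (2:ℚ)^i ≤ (Nat.card (Subgroup.centralizer {x}) : ℚ) := by exact_mod_cast hpi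
        unfold ocWeight
        rw [if_neg hi0]
        split_ifs
        · linarith
        · rw [one_div, inv_mul_eq_div, le_div_iff₀ (by positivity)]
          linarith
      rw [← hmul]
      push_cast
      have hs' : ((N.filter (fun x => orderOf x = p^i)).card : ℚ) ≤
        (Nat.card {y : G | IsConj x y} : ℚ) := by exact_mod_cast hsub
      have h0 : (0:ℚ) ≤ (Nat.card {y : G | IsConj x y} : ℚ) := by positivity
      nlinarith
  have hfin : (N.card : ℚ) ≤ (3/4 - (1/2)/2^e) * (Nat.card G : ℚ) := by
    rw [← ocWeight_sum, Finset.sum_mul]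
    calc (N.card : ℚ) ≤ ((∑ i ∈ Finset.range (e+2),
          (N.filter (fun x => orderOf x = p^i)).card : ℕ) : ℚ) := by exact_mod_cast hle
      _ ≤ _ := by
        push_cast
        exact Finset.sum_le_sum fun i _ => hbound i
  have hpos : (0:ℚ) < (Nat.card G : ℚ) := by exact_mod_cast Nat.card_pos
  have hpos2 : (0:ℚ) < (1/2)/2^e * (Nat.card G : ℚ) := by positivity
  have a1 : (4:ℚ) * (Nat.card (Subgroup.center G) : ℚ) ≤ (Nat.card G : ℚ) := by
    exact_mod_cast hZG
  have a2 : (Nat.card (Subgroup.center G) : ℚ) + (N.card : ℚ) = (Nat.card G : ℚ) := by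
    exact_mod_cast hNcard
  linarith

lemma OCProp.of_pi {ι : Type} {H : ι → Type} [∀ i, Group (H i)]
    (h : OCProp (∀ i, H i)) (i : ι) : OCProp (H i) := by
  classical
  have key : ∀ x : H i, x ∉ Subgroup.center (H i) →
      Pi.mulSingle i x ∉ Subgroup.center (∀ i, H i) := by
    intro x hx hc
    apply hx
    rw [Subgroup.mem_center_iff] at hc ⊢
    intro g
    have := congrFun (hc (Pi.mulSingle i g)) i
    simpa using this
  intro x y hx hy hxy
  have ho : ∀ x : H i, orderOf (Pi.mulSingle i x : ∀ i, H i) = orderOf x := fun x =>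
    orderOf_injective (MonoidHom.mulSingle H i) (Pi.mulSingle_injective i) x
  have hc := h _ _ (key x hx) (key y hy) (by rw [ho, ho, hxy])
  have := (Pi.evalMonoidHom H i).map_isConj hc
  simpa using this

lemma OCProp.of_equiv {G H : Type} [Group G] [Group H] (f : H ≃* G) (h : OCProp G) :
    OCProp H := by
  have key : ∀ x : H, x ∉ Subgroup.center H → f x ∉ Subgroup.center G := by
    intro x hx hc
    apply hx
    rw [Subgroup.mem_center_iff] at hc ⊢
    intro g
    apply f.injective
    simpa using hc (f g)
  intro x y hx hy hxy
  have := h _ _ (key x hx) (key y hy) (by simpa using hxy)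
  simpa using f.symm.toMonoidHom.map_isConj this

/-- **Lemma 2.6.** A non-trivial OC-group is not nilpotent. -/
theorem nontrivial_oc_group_not_nilpotent (G : Type) [Group G] [Finite G]
    (hOC : ∀ x y : G, x ∉ Subgroup.center G → y ∉ Subgroup.center G →
      orderOf x = orderOf y → IsConj x y)
    (h1 : ⊥ < Subgroup.center G) (h2 : Subgroup.center G < ⊤) :
    ¬ Group.IsNilpotent G := by
  intro hnil
  obtain ⟨f⟩ := ((Group.isNilpotent_of_finite_tfae (G := G)).out 0 4).1 hnil
  have hO := OCProp.of_equiv f hOC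
  apply h2.ne
  rw [eq_top_iff]
  intro x _
  rw [Subgroup.mem_center_iff]
  intro g
  apply f.symm.injective
  rw [map_mul, map_mul]
  funext p P
  have : Fact (p : ℕ).Prime := ⟨Nat.prime_of_mem_primeFactors p.2⟩
  have hc := oc_pgroup_comm P.isPGroup' ((hO.of_pi p).of_pi P)
  have hm : f.symm x p P ∈ Subgroup.center P := hc ▸ Subgroup.mem_top _
  exact Subgroup.mem_center_iff.1 hm (f.symm g p P)
end
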